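/- arXiv:2405.14914 — 4 statements merged into one kernel-verified Lean document; each statement's English description precedes it below -/
import Mathlib

section
/- Let Q be a finite multigraph with nonempty vertex set. Then Q is 2-connected if and only if for every partition of Q₀ into s ≥ 2 nonempty parts I₁, …, I_s one has b(Q) > b(Q|_{I₁}) + ⋯ + b(Q|_{I_s}). -/
/-- A finite quiver (equivalently, a finite multigraph with a chosen orientation of each
edge): finitely many vertices and arrows, with source and target maps. -/
structure FinQuiver where
  V : Type
  E : Type
  [fintypeV : Fintype V]
  [fintypeE : Fintype E]
  [decEqV : DecidableEq V]
  s : E → V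
  t : E → V

attribute [instance] FinQuiver.fintypeV FinQuiver.fintypeE FinQuiver.decEqV

namespace FinQuiver

/-- The adjacency (simple) graph of the underlying multigraph: two vertices are adjacent
if some edge joins them.  Connectivity of the multigraph only depends on this graph. -/
def adjGraph (G : FinQuiver) : SimpleGraph G.V :=
  SimpleGraph.fromRel fun a b => ∃ e : G.E, G.s e = a ∧ G.t e = b

/-- The number of connected components of the underlying multigraph. -/
noncomputable def c (G : FinQuiver) : ℕ :=
  Nat.card G.adjGraph.ConnectedComponent

/-- The Betti number `b(Q) = c(Q) - #Q₀ + #Q₁` of the underlying multigraph. -/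
noncomputable def betti (G : FinQuiver) : ℤ :=
  (G.c : ℤ) - Fintype.card G.V + Fintype.card G.E

/-- The underlying multigraph is connected. -/
def Connected (G : FinQuiver) : Prop := G.adjGraph.Connected

/-- Deletion of the edge `e`. -/
noncomputable def deleteEdge (G : FinQuiver) (e : G.E) : FinQuiver :=
  letI : DecidableEq G.E := Classical.decEq _
  { V := G.V, E := {e' : G.E // e' ≠ e}, s := fun e' => G.s e'.1, t := fun e' => G.t e'.1 }

/-- The underlying multigraph is 2-connected: it is connected and stays connected after
deleting any single edge. -/
def TwoConnected (G : FinQuiver) : Prop :=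
  G.Connected ∧ ∀ e : G.E, (G.deleteEdge e).Connected

/-- Restriction `Q|_I` to a subset `I` of the vertices (full sub(multi)graph). -/
noncomputable def restrictV (G : FinQuiver) (I : Set G.V) : FinQuiver :=
  letI : DecidablePred (· ∈ I) := Classical.decPred _
  { V := ↥I
    E := {e : G.E // G.s e ∈ I ∧ G.t e ∈ I}
    s := fun e => ⟨G.s e.1, e.2.1⟩
    t := fun e => ⟨G.t e.1, e.2.2⟩ }

/-- Restriction `Q|_J` to a subset `J` of the edges (keeping all vertices). -/
noncomputable def restrictE (G : FinQuiver) (J : Set G.E) : FinQuiver :=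
  letI : DecidablePred (· ∈ J) := Classical.decPred _
  { V := G.V
    E := ↥J
    s := fun e => G.s e.1
    t := fun e => G.t e.1 }

end FinQuiver

namespace FinQuiver

open Finset

/-- In a connected multigraph, every proper nonempty set of vertices is left by some edge. -/
theorem Connected.exists_edge_boundary {G : FinQuiver} (hG : G.Connected) {S : Set G.V}
    {u v : G.V} (hu : u ∈ S) (hv : v ∉ S) : ∃ e : G.E, ¬ (G.s e ∈ S ↔ G.t e ∈ S) := by
  obtain ⟨p⟩ := hG.preconnected u v
  obtain ⟨d, -, hd, hd'⟩ := p.exists_boundary_dart S hu hv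
  obtain ⟨-, ⟨e, hs, ht⟩ | ⟨e, hs, ht⟩⟩ := (SimpleGraph.fromRel_adj _ _ _).1 d.adj
  · exact ⟨e, by rw [hs, ht]; tauto⟩
  · exact ⟨e, by rw [hs, ht]; tauto⟩

/-- The endpoints of an edge lie in the same connected component. -/
theorem connectedComponentMk_s_eq_t (G : FinQuiver) (e : G.E) :
    G.adjGraph.connectedComponentMk (G.s e) = G.adjGraph.connectedComponentMk (G.t e) := by
  by_cases h : G.s e = G.t e
  · rw [h]
  · refine SimpleGraph.ConnectedComponent.sound (SimpleGraph.Adj.reachable ?_)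
    rw [adjGraph, SimpleGraph.fromRel_adj]
    exact ⟨h, Or.inl ⟨e, rfl, rfl⟩⟩

theorem Connected.c_eq_one {G : FinQuiver} (hG : G.Connected) : G.c = 1 := by
  have := hG.preconnected.subsingleton_connectedComponent
  have := hG.nonempty
  exact Nat.card_unique

theorem one_lt_c_of_not_connected {G : FinQuiver} (hV : Nonempty G.V) (hG : ¬ G.Connected) :
    1 < G.c := by
  refine Finite.one_lt_card_iff_nontrivial.2 (not_subsingleton_iff_nontrivial.1 fun h => hG ?_)
  exact (SimpleGraph.connected_iff _).2
    ⟨fun u v => SimpleGraph.ConnectedComponent.exact (Subsingleton.elim _ _), hV⟩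

/-- The connected components of the parts of the partition of the vertices into the fibres
of `P`. -/
abbrev PartComponent (G : FinQuiver) {ι : Type} (P : G.V → ι) : Type :=
  Σ i : ι, (G.restrictV {v | P v = i}).adjGraph.ConnectedComponent

/-- The component, within its part, of a vertex. -/
noncomputable def partComponentMk (G : FinQuiver) {ι : Type} (P : G.V → ι) (v : G.V) : G.PartComponent P :=
  ⟨P v, (G.restrictV {w | P w = P v}).adjGraph.connectedComponentMk ⟨v, rfl⟩⟩

theorem partComponentMk_surjective (G : FinQuiver) {ι : Type} (P : G.V → ι) :
    Function.Surjective (G.partComponentMk P) := by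
  rintro ⟨i, C⟩
  induction C using SimpleGraph.ConnectedComponent.ind with
  | h v =>
    obtain ⟨v, rfl⟩ := v
    exact ⟨v, rfl⟩

theorem partComponentMk_s_eq_t (G : FinQuiver) {ι : Type} (P : G.V → ι) {e : G.E}
    (he : P (G.s e) = P (G.t e)) :
    G.partComponentMk P (G.s e) = G.partComponentMk P (G.t e) := by
  have key : ∀ (i : ι) (hs : P (G.s e) = i) (ht : P (G.t e) = i),
      G.partComponentMk P (G.s e) = G.partComponentMk P (G.t e) := by
    intro i hs ht
    have hmk : ∀ (v : G.V) (hv : P v = i), G.partComponentMk P v =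
        ⟨i, (G.restrictV {w | P w = i}).adjGraph.connectedComponentMk ⟨v, hv⟩⟩ := by
      rintro v rfl
      rfl
    rw [hmk _ hs, hmk _ ht]
    exact congrArg (Sigma.mk i)
      ((G.restrictV {w | P w = i}).connectedComponentMk_s_eq_t ⟨e, hs, ht⟩)
  exact key _ he rfl

instance finite_partComponent (G : FinQuiver) {ι : Type} (P : G.V → ι) :
    Finite (G.PartComponent P) :=
  Finite.of_surjective _ (G.partComponentMk_surjective P)

theorem card_le_card_partComponent (G : FinQuiver) {ι : Type} [Fintype ι] {P : G.V → ι}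
    (hP : Function.Surjective P) : Fintype.card ι ≤ Nat.card (G.PartComponent P) := by
  rw [← Nat.card_eq_fintype_card]
  refine Nat.card_le_card_of_surjective Sigma.fst fun i => ?_
  obtain ⟨v, rfl⟩ := hP i
  exact ⟨G.partComponentMk P v, rfl⟩

/-- The Betti numbers of the parts of a partition, in terms of the number of components of the
parts and the number of edges between different parts. -/
theorem sum_betti_restrictV (G : FinQuiver) {ι : Type} [Fintype ι] (P : G.V → ι) :
    ∑ i : ι, (G.restrictV {v | P v = i}).betti =
      Nat.card (G.PartComponent P) - Fintype.card G.V + Fintype.card G.E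
        - Nat.card {e : G.E // P (G.s e) ≠ P (G.t e)} := by
  classical
  have hc : Nat.card (G.PartComponent P) = ∑ i, (G.restrictV {v | P v = i}).c :=
    Nat.card_sigma
  have hV : Nat.card G.V = ∑ i, Nat.card (G.restrictV {v | P v = i}).V := by
    rw [← Nat.card_congr (Equiv.sigmaFiberEquiv P), Nat.card_sigma]
    rfl
  have hE : Nat.card {e : G.E // P (G.s e) = P (G.t e)} =
      ∑ i, Nat.card (G.restrictV {v | P v = i}).E := by
    rw [← Nat.card_sigma]
    exact Nat.card_congr
      { toFun := fun e => ⟨P (G.t e.1), e.1, e.2, rfl⟩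
        invFun := fun e => ⟨e.2.1, e.2.2.1.trans e.2.2.2.symm⟩
        left_inv := fun _ => rfl
        right_inv := by
          rintro ⟨i, e, hs, ht⟩
          obtain rfl : P (G.t e) = i := ht
          rfl }
  have hsplit : Nat.card {e : G.E // P (G.s e) = P (G.t e)} +
      Nat.card {e : G.E // P (G.s e) ≠ P (G.t e)} = Nat.card G.E := by
    rw [← Nat.card_sum]
    exact Nat.card_congr (Equiv.sumCompl fun e : G.E => P (G.s e) = P (G.t e))
  simp only [betti, ← Nat.card_eq_fintype_card, sum_add_distrib, sum_sub_distrib]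
  rw [← hsplit, hE, hV, hc]
  push_cast
  ring

/-- In a 2-connected multigraph, if the vertices are mapped onto a set with at least two
elements, then at least as many edges join vertices with different images as there are
elements of that set. -/
theorem TwoConnected.card_le_card_edge_ne {G : FinQuiver} (hG : G.TwoConnected) {κ : Type}
    [Finite κ] [Nontrivial κ] {f : G.V → κ} (hf : Function.Surjective f) :
    Nat.card κ ≤ Nat.card {e : G.E // f (G.s e) ≠ f (G.t e)} := by
  classical
  have := Fintype.ofFinite κ
  let r : κ → {e : G.E // f (G.s e) ≠ f (G.t e)} → Prop :=
    fun k e => f (G.s e.1) = k ∨ f (G.t e.1) = k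
  have habove : ∀ k ∈ (univ : Finset κ), 2 ≤ #(bipartiteAbove r univ k) := by
    intro k _
    obtain ⟨k', hk'⟩ := exists_ne k
    obtain ⟨u, hu⟩ := hf k
    obtain ⟨v, rfl⟩ := hf k'
    obtain ⟨e, he⟩ := hG.1.exists_edge_boundary (S := {w | f w = k}) hu hk'
    obtain ⟨⟨e', hne⟩, he'⟩ :=
      (hG.2 e).exists_edge_boundary (S := {w : G.V | f w = k}) hu hk'
    replace he : ¬ (f (G.s e) = k ↔ f (G.t e) = k) := he
    replace he' : ¬ (f (G.s e') = k ↔ f (G.t e') = k) := he'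
    refine one_lt_card.2 ⟨⟨e, fun h => he (by rw [h])⟩, ?_, ⟨e', fun h => he' (by rw [h])⟩, ?_,
      fun h => hne (congrArg Subtype.val h).symm⟩
    · simp only [mem_bipartiteAbove, mem_univ, true_and, r]
      tauto
    · simp only [mem_bipartiteAbove, mem_univ, true_and, r]
      tauto
  have hbelow : ∀ e ∈ (univ : Finset {e : G.E // f (G.s e) ≠ f (G.t e)}),
      #(bipartiteBelow r univ e) ≤ 2 := by
    intro e _
    refine (card_le_card (t := {f (G.s e.1), f (G.t e.1)}) fun k hk => ?_).trans card_le_two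
    simp only [mem_bipartiteBelow, mem_univ, true_and, r] at hk
    simpa [eq_comm] using hk
  have h := card_mul_le_card_mul r habove hbelow
  rw [card_univ, card_univ, ← Nat.card_eq_fintype_card, ← Nat.card_eq_fintype_card] at h
  omega

theorem TwoConnected.sum_betti_lt {G : FinQuiver} (hG : G.TwoConnected) {ι : Type} [Fintype ι]
    {P : G.V → ι} (hP : Function.Surjective P) (hι : 2 ≤ Fintype.card ι) :
    ∑ i : ι, (G.restrictV {v | P v = i}).betti < G.betti := by
  have : Nontrivial (G.PartComponent P) :=
    Finite.one_lt_card_iff_nontrivial.1 (hι.trans (G.card_le_card_partComponent hP))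
  have hle := hG.card_le_card_edge_ne (G.partComponentMk_surjective P)
  have hcross : Nat.card {e : G.E // G.partComponentMk P (G.s e) ≠ G.partComponentMk P (G.t e)} ≤
      Nat.card {e : G.E // P (G.s e) ≠ P (G.t e)} :=
    Nat.card_le_card_of_injective
      (Subtype.map id fun e he h => he (G.partComponentMk_s_eq_t P h))
      (Subtype.map_injective _ Function.injective_id)
  rw [sum_betti_restrictV, betti, hG.1.c_eq_one]
  omega

/-- The partition into the fibres of `P` does not lower the total Betti number if few edges join
different fibres. -/
theorem betti_le_sum_betti (G : FinQuiver) {ι : Type} [Fintype ι] {P : G.V → ι}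
    (hP : Function.Surjective P)
    (h : G.c + Nat.card {e : G.E // P (G.s e) ≠ P (G.t e)} ≤ Fintype.card ι) :
    G.betti ≤ ∑ i : ι, (G.restrictV {v | P v = i}).betti := by
  have := G.card_le_card_partComponent hP
  rw [sum_betti_restrictV, betti]
  omega

theorem connected_of_sum_betti_lt {G : FinQuiver} (hV : Nonempty G.V)
    (h : ∀ (ι : Type) [Fintype ι] (P : G.V → ι), Function.Surjective P →
      2 ≤ Fintype.card ι → (∑ i : ι, (G.restrictV {v | P v = i}).betti) < G.betti) :
    G.Connected := by
  by_contra hG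
  have hc := one_lt_c_of_not_connected hV hG
  let := Fintype.ofFinite G.adjGraph.ConnectedComponent
  have hcard : Fintype.card G.adjGraph.ConnectedComponent = G.c :=
    Nat.card_eq_fintype_card.symm
  have hsurj : Function.Surjective G.adjGraph.connectedComponentMk := Quot.mk_surjective
  refine (h _ _ hsurj (hcard ▸ hc)).not_ge (G.betti_le_sum_betti hsurj ?_)
  have : IsEmpty {e : G.E // G.adjGraph.connectedComponentMk (G.s e) ≠
      G.adjGraph.connectedComponentMk (G.t e)} := ⟨fun e => e.2 (G.connectedComponentMk_s_eq_t e.1)⟩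
  rw [Nat.card_of_isEmpty, hcard, add_zero]

theorem deleteEdge_connected_of_sum_betti_lt {G : FinQuiver} (hG : G.Connected)
    (h : ∀ (ι : Type) [Fintype ι] (P : G.V → ι), Function.Surjective P →
      2 ≤ Fintype.card ι → (∑ i : ι, (G.restrictV {v | P v = i}).betti) < G.betti) (e : G.E) :
    (G.deleteEdge e).Connected := by
  by_contra hGe
  have hc := one_lt_c_of_not_connected (G := G.deleteEdge e) hG.nonempty hGe
  let := Fintype.ofFinite (G.deleteEdge e).adjGraph.ConnectedComponent
  have hcard : Fintype.card (G.deleteEdge e).adjGraph.ConnectedComponent = (G.deleteEdge e).c :=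
    Nat.card_eq_fintype_card.symm
  let P : G.V → (G.deleteEdge e).adjGraph.ConnectedComponent :=
    (G.deleteEdge e).adjGraph.connectedComponentMk
  have hsurj : Function.Surjective P := Quot.mk_surjective
  refine (h _ P hsurj (hcard ▸ hc)).not_ge (G.betti_le_sum_betti hsurj ?_)
  have hmem : ∀ e' : {e' : G.E // P (G.s e') ≠ P (G.t e')}, e'.1 = e := fun e' =>
    by_contra fun hne => e'.2 ((G.deleteEdge e).connectedComponentMk_s_eq_t ⟨e'.1, hne⟩)
  have : Subsingleton {e' : G.E // P (G.s e') ≠ P (G.t e')} :=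
    ⟨fun a b => Subtype.ext ((hmem a).trans (hmem b).symm)⟩
  have hle : Nat.card {e' : G.E // P (G.s e') ≠ P (G.t e')} ≤ 1 :=
    Finite.card_le_one_iff_subsingleton.2 this
  rw [hG.c_eq_one, hcard]
  omega

end FinQuiver

/-- A finite multigraph with nonempty vertex set is 2-connected if and
only if for every partition of its vertex set into `s ≥ 2` nonempty parts `I₁, …, I_s`
(encoded by a surjection `P` onto an index type with at least two elements, the parts
being the fibres of `P`) one has `b(Q) > b(Q|_{I₁}) + ⋯ + b(Q|_{I_s})`. -/
theorem twoConnected_iff_betti_gt (G : FinQuiver) (hV : Nonempty G.V) :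
    G.TwoConnected ↔
      ∀ (ι : Type) [Fintype ι] (P : G.V → ι), Function.Surjective P →
        2 ≤ Fintype.card ι →
        (∑ i : ι, (G.restrictV {v | P v = i}).betti) < G.betti := by
  refine ⟨fun hG ι _ P hP hι => hG.sum_betti_lt hP hι, fun h => ?_⟩
  have hG := FinQuiver.connected_of_sum_betti_lt hV h
  exact ⟨hG, FinQuiver.deleteEdge_connected_of_sum_betti_lt hG h⟩
end

section
/- Let Q be a finite quiver whose underlying multigraph is 2-connected, and let q be a prime power. Then the real sequences α ↦ q^{−α·b(Q)} · A_{(Q,α),1̲}(q) and α ↦ q^{−α(2·#Q₁ − #Q₀ + 1)} · B_{(Q,α)}(q) both converge as α → ∞, and their limits A_Q and B_{μ_Q} satisfy B_{μ_Q}/(1 − q^{−1})^{#Q₀} = A_Q/(1 − q^{−1}). -/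
/-- The ring of truncated polynomials `F[t]/(t^α)`. -/
abbrev TruncRing (F : Type) [CommRing F] (α : ℕ) : Type :=
  Polynomial F ⧸ Ideal.span {(Polynomial.X : Polynomial F) ^ α}

/-- The image of `t` in `F[t]/(t^α)`. -/
noncomputable def tvar (F : Type) [CommRing F] (α : ℕ) : TruncRing F α :=
  Ideal.Quotient.mk _ (Polynomial.X : Polynomial F)
/-- The gauge relation on rank-`1̲` representations of the quiver `G` over the commutative
ring `R`: `x` and `y` are related iff they differ by the change-of-basis action of
`(Rˣ)^{Q₀}`, `(u·x)_a := u_{t(a)} x_a u_{s(a)}⁻¹`. -/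
def GaugeRel (G : FinQuiver) (R : Type) [CommRing R] (x y : G.E → R) : Prop :=
  ∃ u : G.V → Rˣ, ∀ a : G.E, y a = (u (G.t a) : R) * x a * ((u (G.s a))⁻¹ : Rˣ)

/-- `A_{(Q,α),1̲}(q)`: the number of orbits of tuples `x ∈ R^{Q₁}` whose support multigraph
(vertex set `Q₀`, edge set `{a | x_a ≠ 0}`) is connected, under the action of `(Rˣ)^{Q₀}`;
that is, the number of isomorphism classes of indecomposable locally free rank-`1̲`
representations of `Q` over `R`. -/
noncomputable def KacCount (G : FinQuiver) (R : Type) [CommRing R] : ℕ :=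
  Nat.card (Quot (fun x y : {x : G.E → R // (G.restrictE {a | x a ≠ 0}).Connected} =>
    GaugeRel G R x.1 y.1))

/-- `B_{(Q,α)}(q)`: the number of pairs `(x,y) ∈ R^{Q₁} × R^{Q₁}` satisfying the rank-`1̲`
moment map equations `∑_{a : t(a)=i} x_a y_a = ∑_{a : s(a)=i} x_a y_a` for every vertex `i`. -/
noncomputable def BCount (G : FinQuiver) (R : Type) [CommRing R] : ℕ :=
  Nat.card {xy : (G.E → R) × (G.E → R) //
    ∀ i : G.V, (∑ a : G.E, if G.t a = i then xy.1 a * xy.2 a else 0)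
             = ∑ a : G.E, if G.s a = i then xy.1 a * xy.2 a else 0}

/-- The number of potentials vanishing at `ρ` that are killed by `x` along every edge. -/
noncomputable def FinQuiver.rootedKer (G : FinQuiver) (R : Type) [CommRing R] (ρ : G.V)
    (x : G.E → R) : ℕ :=
  Nat.card {w : G.V → R // w ρ = 0 ∧ ∀ a, x a * (w (G.t a) - w (G.s a)) = 0}

/-- The proportion of elements of `R` annihilating `r`. -/
noncomputable def annDensity (R : Type) [CommRing R] (r : R) : ℝ :=
  (Nat.card {z : R // z * r = 0} : ℝ) / Nat.card R

theorem FinQuiver.Connected.vertex_induction {G : FinQuiver} (hG : G.Connected) {ρ : G.V}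
    {P : G.V → Prop} (hρ : P ρ) (h : ∀ a, P (G.s a) ↔ P (G.t a)) (v : G.V) : P v := by
  have hr : G.adjGraph.Reachable ρ v := hG.preconnected ρ v
  obtain ⟨p⟩ := hr
  induction p with
  | nil => exact hρ
  | cons hadj _ ih =>
    apply ih
    rw [FinQuiver.adjGraph, SimpleGraph.fromRel_adj] at hadj
    rcases hadj.2 with ⟨e, rfl, rfl⟩ | ⟨e, rfl, rfl⟩
    · exact (h e).1 hρ
    · exact (h e).2 hρ

theorem FinQuiver.restrictE_connected_of_forall {G : FinQuiver} (hG : G.Connected)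
    {J : Set G.E} (hJ : ∀ a, a ∈ J) : (G.restrictE J).Connected := by
  refine SimpleGraph.Connected.mono (G := G.adjGraph) (G' := (G.restrictE J).adjGraph) ?_ hG
  intro a b hab
  rw [FinQuiver.adjGraph, SimpleGraph.fromRel_adj] at hab
  refine (SimpleGraph.fromRel_adj _ _ _).2 ⟨hab.1, ?_⟩
  rcases hab.2 with ⟨e, h1, h2⟩ | ⟨e, h1, h2⟩
  · exact Or.inl ⟨⟨e, hJ e⟩, h1, h2⟩
  · exact Or.inr ⟨⟨e, hJ e⟩, h1, h2⟩

/-- The order of the stabiliser of a representation with connected support. -/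
theorem card_stabilizer (G : FinQuiver) (R : Type) [CommRing R] [IsLocalRing R] (ρ : G.V)
    (x : G.E → R) (hx : (G.restrictE {a | x a ≠ 0}).Connected) :
    Nat.card {u : G.V → Rˣ // ∀ a, (u (G.t a) : R) * x a * ((u (G.s a))⁻¹ : Rˣ) = x a} =
      Nat.card Rˣ * G.rootedKer R ρ x := by
  have key : ∀ (u : G.V → Rˣ) a, (u (G.t a) : R) * x a * ((u (G.s a))⁻¹ : Rˣ) = x a ↔
      x a * ((u (G.t a) : R) - u (G.s a)) = 0 := by
    intro u a
    rw [Units.mul_inv_eq_iff_eq_mul, mul_sub, sub_eq_zero, mul_comm]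
  rw [FinQuiver.rootedKer, ← Nat.card_prod]
  refine Nat.card_congr (Equiv.ofBijective (fun u => (u.1 ρ, ⟨fun i => (u.1 i : R) - u.1 ρ,
    sub_self _, fun a => ?_⟩)) ⟨?_, ?_⟩)
  · have := (key _ _).1 (u.2 a)
    simpa using this
  · rintro ⟨u, hu⟩ ⟨u', hu'⟩ h
    simp only [Prod.mk.injEq, Subtype.mk.injEq] at h
    obtain ⟨h1, h2⟩ := h
    refine Subtype.ext (funext fun i => Units.ext ?_)
    have := congrFun h2 i
    simpa [h1] using this
  · rintro ⟨c, w, hw0, hw⟩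
    have hnon : ∀ i, w i ∈ IsLocalRing.maximalIdeal R := by
      refine hx.vertex_induction (ρ := ρ) ?_ ?_
      · rw [hw0]; exact zero_mem _
      · rintro ⟨a, ha⟩
        have hmem : w (G.t a) - w (G.s a) ∈ IsLocalRing.maximalIdeal R := by
          rw [IsLocalRing.mem_maximalIdeal, mem_nonunits_iff]
          intro hu
          exact ha ((hu.mul_left_eq_zero).1 (hw a))
        change w (G.s a) ∈ _ ↔ w (G.t a) ∈ _
        constructor
        · intro h; simpa using add_mem hmem h
        · intro h; simpa using sub_mem h hmem
    have hunit : ∀ i, IsUnit ((c : R) + w i) := by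
      intro i
      by_contra hc
      have h1 : (c : R) + w i ∈ IsLocalRing.maximalIdeal R := hc
      have h2 : (c : R) ∈ IsLocalRing.maximalIdeal R := by simpa using sub_mem h1 (hnon i)
      exact h2 c.isUnit
    refine ⟨⟨fun i => (hunit i).unit, fun a => ?_⟩, ?_⟩
    · refine (key (fun i => (hunit i).unit) a).2 ?_
      simpa using hw a
    · simp only [Prod.mk.injEq, Subtype.mk.injEq]
      refine ⟨Units.ext (by simp [hw0]), funext fun i => by simp [hw0]⟩

/-- Change of basis on representations with connected support. -/
@[reducible] def gaugeAction (G : FinQuiver) (R : Type) [CommRing R] :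
    MulAction (G.V → Rˣ) {x : G.E → R // (G.restrictE {a | x a ≠ 0}).Connected} where
  smul u x := ⟨fun a => (u (G.t a) : R) * x.1 a * ((u (G.s a))⁻¹ : Rˣ), by
    have h : {a | (u (G.t a) : R) * x.1 a * ((u (G.s a))⁻¹ : Rˣ) ≠ 0} = {a | x.1 a ≠ 0} := by
      ext a; simp
    rw [h]; exact x.2⟩
  one_smul x := Subtype.ext (funext fun a => by
    change ((1 : Rˣ) : R) * x.1 a * ((1 : Rˣ)⁻¹ : Rˣ) = x.1 a
    simp)
  mul_smul u v x := Subtype.ext (funext fun a => by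
    change ((u (G.t a) * v (G.t a) : Rˣ) : R) * x.1 a * ((u (G.s a) * v (G.s a))⁻¹ : Rˣ) =
      (u (G.t a) : R) * ((v (G.t a) : R) * x.1 a * ((v (G.s a))⁻¹ : Rˣ)) * ((u (G.s a))⁻¹ : Rˣ)
    rw [mul_inv]; push_cast; ring)

open Classical in
theorem kacCount_mul (G : FinQuiver) (R : Type) [CommRing R] [IsLocalRing R] [Fintype R]
    (ρ : G.V) :
    KacCount G R * Nat.card Rˣ ^ Fintype.card G.V = Nat.card Rˣ *
      ∑ x : {x : G.E → R // (G.restrictE {a | x a ≠ 0}).Connected}, G.rootedKer R ρ x.1 := by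
  let := gaugeAction G R
  have h1 : KacCount G R = Nat.card (MulAction.orbitRel.Quotient (G.V → Rˣ)
      {x : G.E → R // (G.restrictE {a | x a ≠ 0}).Connected}) := by
    refine Nat.card_congr (Quot.congr (Equiv.refl _) fun x y => ?_)
    change GaugeRel G R x.1 y.1 ↔ (MulAction.orbitRel _ _).r x y
    have : (MulAction.orbitRel (G.V → Rˣ)
      {x : G.E → R // (G.restrictE {a | x a ≠ 0}).Connected}).r y x ↔ GaugeRel G R x.1 y.1 := by
      change y ∈ MulAction.orbit _ x ↔ _
      rw [MulAction.mem_orbit_iff]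
      refine exists_congr fun u => ?_
      rw [Subtype.ext_iff, funext_iff]
      exact forall_congr' fun a => eq_comm
    rw [← this]
    exact ⟨fun h => Setoid.symm' _ h, fun h => Setoid.symm' _ h⟩
  have h2 : Nat.card Rˣ ^ Fintype.card G.V = Nat.card (G.V → Rˣ) := by
    simp [Nat.card_eq_fintype_card]
  rw [h1, h2, ← Nat.card_prod,
    ← Nat.card_congr (MulAction.sigmaFixedByEquivOrbitsProdGroup _ _), Finset.mul_sum]
  have e : (Σ u : G.V → Rˣ, MulAction.fixedBy
      {x : G.E → R // (G.restrictE {a | x a ≠ 0}).Connected} u) ≃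
      (Σ x : {x : G.E → R // (G.restrictE {a | x a ≠ 0}).Connected},
        {u : G.V → Rˣ // ∀ a, (u (G.t a) : R) * x.1 a * ((u (G.s a))⁻¹ : Rˣ) = x.1 a}) :=
    { toFun := fun p => ⟨p.2.1, p.1, fun a => congrFun (congrArg Subtype.val p.2.2) a⟩
      invFun := fun p => ⟨p.2.1, p.1, Subtype.ext (funext p.2.2)⟩
      left_inv := fun _ => rfl
      right_inv := fun _ => rfl }
  rw [Nat.card_congr e, Nat.card_sigma]
  exact Finset.sum_congr rfl fun x _ => card_stabilizer G R ρ x.1 x.2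

open Classical in
/-- Summing a product weight against `rootedKer` localises on potentials. -/
theorem sum_prod_mul_rootedKer (G : FinQuiver) (R : Type) [CommRing R] [Fintype R] (ρ : G.V)
    (h : G.E → R → ℝ) :
    ∑ x : G.E → R, (∏ a, h a (x a)) * (G.rootedKer R ρ x : ℝ) =
      ∑ w : {w : G.V → R // w ρ = 0},
        ∏ a, ∑ r : R, if r * (w.1 (G.t a) - w.1 (G.s a)) = 0 then h a r else 0 := by
  have hK : ∀ x : G.E → R, (G.rootedKer R ρ x : ℝ) = ∑ w : {w : G.V → R // w ρ = 0},
      if ∀ a, x a * (w.1 (G.t a) - w.1 (G.s a)) = 0 then (1 : ℝ) else 0 := by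
    intro x
    rw [FinQuiver.rootedKer, Nat.card_congr (Equiv.subtypeSubtypeEquivSubtypeInter
      (fun w : G.V → R => w ρ = 0)
      (fun w => ∀ a, x a * (w (G.t a) - w (G.s a)) = 0)).symm, Nat.card_eq_fintype_card,
      Fintype.card_subtype, Finset.sum_boole]
  simp_rw [hK, Finset.mul_sum]
  rw [Finset.sum_comm]
  refine Finset.sum_congr rfl fun w _ => ?_
  rw [Finset.prod_univ_sum, Fintype.piFinset_univ]
  refine Finset.sum_congr rfl fun x _ => ?_
  split_ifs with hx
  · rw [mul_one]
    exact Finset.prod_congr rfl fun a _ => (if_pos (hx a)).symm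
  · push Not at hx
    obtain ⟨a, ha⟩ := hx
    rw [mul_zero]
    exact (Finset.prod_eq_zero (Finset.mem_univ a) (if_neg ha)).symm

theorem sum_ite_ann (R : Type) [CommRing R] [Fintype R] [DecidableEq R] (z : R) :
    (∑ r : R, if r * z = 0 then (1 : ℝ) else 0) = Nat.card R * annDensity R z := by
  have : (Nat.card R : ℝ) ≠ 0 := by exact_mod_cast Nat.card_pos.ne'
  rw [annDensity, mul_div_cancel₀ _ this, Nat.card_eq_fintype_card, Fintype.card_subtype,
    Finset.sum_boole]

open Classical in
theorem sum_rootedKer (G : FinQuiver) (R : Type) [CommRing R] [Fintype R] (ρ : G.V) :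
    ∑ x : G.E → R, (G.rootedKer R ρ x : ℝ) =
      (Nat.card R : ℝ) ^ Fintype.card G.E * ∑ w : {w : G.V → R // w ρ = 0},
        ∏ a, annDensity R (w.1 (G.t a) - w.1 (G.s a)) := by
  have := sum_prod_mul_rootedKer G R ρ fun _ _ => 1
  simp only [Finset.prod_const_one, one_mul] at this
  rw [this, Finset.mul_sum]
  refine Finset.sum_congr rfl fun w _ => ?_
  simp_rw [sum_ite_ann, Finset.prod_mul_distrib]
  simp

open Classical in
theorem sum_rootedKer_of_eq_zero (G : FinQuiver) (R : Type) [CommRing R] [Fintype R] (ρ : G.V)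
    (e : G.E) :
    (Nat.card R : ℝ) * ∑ x : G.E → R, (if x e = 0 then (G.rootedKer R ρ x : ℝ) else 0) =
      (Nat.card R : ℝ) ^ Fintype.card G.E * ∑ w : {w : G.V → R // w ρ = 0},
        ∏ a ∈ Finset.univ.erase e, annDensity R (w.1 (G.t a) - w.1 (G.s a)) := by
  have := sum_prod_mul_rootedKer G R ρ fun a r => if a = e then (if r = 0 then 1 else 0) else 1
  have h1 : ∀ x : G.E → R, (∏ a, if a = e then (if x a = 0 then (1 : ℝ) else 0) else 1) =
      if x e = 0 then 1 else 0 := by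
    intro x
    rw [Finset.prod_ite_eq' Finset.univ e]; simp
  simp only [h1, ite_mul, one_mul, zero_mul] at this
  rw [this, Finset.mul_sum, Finset.mul_sum]
  refine Finset.sum_congr rfl fun w _ => ?_
  rw [← Finset.mul_prod_erase _ _ (Finset.mem_univ e)]
  have h2 : (∑ r : R, if r * (w.1 (G.t e) - w.1 (G.s e)) = 0 then
      (if e = e then (if r = 0 then (1 : ℝ) else 0) else 1) else 0) = 1 := by
    rw [Finset.sum_eq_single 0]
    · simp
    · intro b _ hb; simp [hb]
    · simp
  have h3 : ∏ a ∈ Finset.univ.erase e, (∑ r : R, if r * (w.1 (G.t a) - w.1 (G.s a)) = 0 then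
      (if a = e then (if r = 0 then (1 : ℝ) else 0) else 1) else 0) =
      ∏ a ∈ Finset.univ.erase e, (Nat.card R * annDensity R (w.1 (G.t a) - w.1 (G.s a))) := by
    refine Finset.prod_congr rfl fun a ha => ?_
    rw [← sum_ite_ann]
    refine Finset.sum_congr rfl fun r _ => ?_
    rw [if_neg (Finset.ne_of_mem_erase ha)]
  rw [h2, h3, Finset.prod_mul_distrib, Finset.prod_const, Finset.card_erase_of_mem
    (Finset.mem_univ e), Finset.card_univ, one_mul, ← mul_assoc, ← pow_succ']
  have : 0 < Fintype.card G.E := Fintype.card_pos_iff.2 ⟨e⟩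
  rw [Nat.sub_add_cancel this]

open Classical in
theorem AddChar.IsPrimitive.sum_pi {R ι : Type} [CommRing R] [Fintype R] [Fintype ι]
    [DecidableEq ι]
    {ψ : AddChar R ℂ} (hψ : ψ.IsPrimitive) (c : ι → R) :
    ∑ v : ι → R, ψ (∑ i, v i * c i) =
      if ∀ i, c i = 0 then (Fintype.card R : ℂ) ^ Fintype.card ι else 0 := by
  have h : ∀ v : ι → R, ψ (∑ i, v i * c i) = ∏ i, ψ (v i * c i) := fun v => by
    exact map_prod ψ.toMonoidHom (fun i => Multiplicative.ofAdd (v i * c i)) Finset.univ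
  simp_rw [h]
  rw [← Fintype.piFinset_univ, ← Finset.prod_univ_sum (fun _ => Finset.univ)
    (fun i r => ψ (r * c i))]
  simp_rw [fun i => AddChar.sum_mulShift (c i) hψ]
  split_ifs with hc
  · simp [hc]
  · push Not at hc
    obtain ⟨i, hi⟩ := hc
    exact Finset.prod_eq_zero (Finset.mem_univ i) (by simp [hi])

theorem card_kernel_eq_mul_rootedKer (G : FinQuiver) (R : Type) [CommRing R] (ρ : G.V)
    (x : G.E → R) :
    Nat.card {v : G.V → R // ∀ a, x a * (v (G.t a) - v (G.s a)) = 0} =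
      Nat.card R * G.rootedKer R ρ x := by
  rw [FinQuiver.rootedKer, ← Nat.card_prod]
  exact Nat.card_congr
    { toFun := fun v => (v.1 ρ, ⟨fun i => v.1 i - v.1 ρ, sub_self _, fun a => by
        simpa using v.2 a⟩)
      invFun := fun p => ⟨fun i => p.1 + p.2.1 i, fun a => by simpa using p.2.2.2 a⟩
      left_inv := fun v => by simp
      right_inv := fun p => by
        obtain ⟨c, w, hw, _⟩ := p
        simp [hw] }

open Classical in
/-- Duality between the moment map and the infinitesimal gauge action. -/
theorem card_momentFibre_mul (G : FinQuiver) (R : Type) [CommRing R] [Fintype R] (ρ : G.V)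
    {ψ : AddChar R ℂ} (hψ : ψ.IsPrimitive) (x : G.E → R) :
    Nat.card {y : G.E → R // ∀ i : G.V, (∑ a : G.E, if G.t a = i then x a * y a else 0)
             = ∑ a : G.E, if G.s a = i then x a * y a else 0} * Nat.card R ^ Fintype.card G.V =
      Nat.card R ^ (Fintype.card G.E + 1) * G.rootedKer R ρ x := by
  rw [pow_succ, mul_assoc, ← card_kernel_eq_mul_rootedKer]
  have hpair : ∀ (y : G.E → R) (v : G.V → R),
      ∑ i, v i * ((∑ a : G.E, if G.t a = i then x a * y a else 0) -
        ∑ a : G.E, if G.s a = i then x a * y a else 0) =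
      ∑ a, y a * (x a * (v (G.t a) - v (G.s a))) := by
    intro y v
    simp_rw [mul_sub, Finset.sum_sub_distrib, Finset.mul_sum]
    rw [Finset.sum_comm, Finset.sum_comm (f := fun i a => v i * if G.s a = i then _ else _)]
    congr 1 <;>
    · refine Finset.sum_congr rfl fun a _ => ?_
      simp only [mul_ite, mul_zero, Finset.sum_ite_eq, Finset.mem_univ, if_true]
      ring
  have hy : ∀ y : G.E → R, ∑ v : G.V → R, ψ (∑ a, y a * (x a * (v (G.t a) - v (G.s a)))) =
      if ∀ i : G.V, (∑ a : G.E, if G.t a = i then x a * y a else 0) =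
        ∑ a : G.E, if G.s a = i then x a * y a else 0
      then (Fintype.card R : ℂ) ^ Fintype.card G.V else 0 := by
    intro y
    simp_rw [← hpair]
    rw [hψ.sum_pi]
    simp_rw [sub_eq_zero]
  have hsum := Finset.sum_comm (s := (Finset.univ : Finset (G.E → R)))
    (t := (Finset.univ : Finset (G.V → R)))
    (f := fun y v => ψ (∑ a, y a * (x a * (v (G.t a) - v (G.s a)))))
  rw [Finset.sum_congr rfl fun y _ => hy y, Finset.sum_congr rfl fun (v : G.V → R) _ =>
    hψ.sum_pi fun a => x a * (v (G.t a) - v (G.s a))] at hsum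
  rw [← Finset.sum_filter, ← Finset.sum_filter] at hsum
  simp only [Finset.sum_const, nsmul_eq_mul] at hsum
  simp only [Nat.card_eq_fintype_card, Fintype.card_subtype]
  rw [mul_comm (_ ^ Fintype.card G.E)]
  exact_mod_cast hsum

open Classical in
theorem bCount_mul (G : FinQuiver) (R : Type) [CommRing R] [Fintype R] (ρ : G.V)
    {ψ : AddChar R ℂ} (hψ : ψ.IsPrimitive) :
    BCount G R * Nat.card R ^ Fintype.card G.V =
      Nat.card R ^ (Fintype.card G.E + 1) * ∑ x : G.E → R, G.rootedKer R ρ x := by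
  have h : BCount G R = ∑ x : G.E → R, Nat.card {y : G.E → R // ∀ i : G.V,
      (∑ a : G.E, if G.t a = i then x a * y a else 0)
        = ∑ a : G.E, if G.s a = i then x a * y a else 0} := by
    rw [← Nat.card_sigma]
    exact Nat.card_congr
      { toFun := fun p => ⟨p.1.1, p.1.2, p.2⟩
        invFun := fun p => ⟨(p.1, p.2.1), p.2.2⟩
        left_inv := fun _ => rfl
        right_inv := fun _ => rfl }
  rw [h, Finset.sum_mul, Finset.mul_sum]
  exact Finset.sum_congr rfl fun x _ => card_momentFibre_mul G R ρ hψ x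

/-- Every vertex other than `ρ` has an edge leading closer to `ρ`. -/
theorem FinQuiver.Connected.exists_edge_toward {G : FinQuiver} (hG : G.Connected) (ρ v : G.V)
    (hv : v ≠ ρ) : ∃ e : G.E,
      (G.t e = v ∧ G.adjGraph.dist (G.s e) ρ < G.adjGraph.dist v ρ) ∨
      (G.s e = v ∧ G.adjGraph.dist (G.t e) ρ < G.adjGraph.dist v ρ) := by
  obtain ⟨p, hp⟩ := SimpleGraph.Connected.exists_walk_length_eq_dist hG v ρ
  cases p with
  | nil => exact absurd rfl hv
  | @cons _ u _ hadj p =>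
    have hlt : G.adjGraph.dist u ρ < G.adjGraph.dist v ρ := by
      rw [← hp, SimpleGraph.Walk.length_cons]
      exact Nat.lt_succ_of_le (SimpleGraph.dist_le p)
    rw [FinQuiver.adjGraph, SimpleGraph.fromRel_adj] at hadj
    rcases hadj.2 with ⟨e, h1, h2⟩ | ⟨e, h1, h2⟩
    · exact ⟨e, Or.inr ⟨h1, h2 ▸ hlt⟩⟩
    · exact ⟨e, Or.inl ⟨h2, h1 ▸ hlt⟩⟩

open Classical in
/-- Spanning-tree bound for sums over potentials on a connected quiver. -/
theorem FinQuiver.Connected.sum_prod_le {G : FinQuiver} (hG : G.Connected) {R : Type}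
    [CommRing R] [Fintype R] (ρ : G.V) (f : R → ℝ) (h0 : ∀ r, 0 ≤ f r) (h1 : ∀ r, f r ≤ 1) :
    ∑ w : {w : G.V → R // w ρ = 0}, ∏ a, f (w.1 (G.t a) - w.1 (G.s a)) ≤
      (∑ r, f r) ^ (Fintype.card G.V - 1) := by
  choose e he using fun v : {v : G.V // v ≠ ρ} => hG.exists_edge_toward ρ v.1 v.2
  have hinj : Function.Injective e := by
    intro v v' h
    apply Subtype.ext
    have h1 := he v
    have h2 := he v'
    rw [h] at h1
    rcases h1 with ⟨h1, h1'⟩ | ⟨h1, h1'⟩ <;> rcases h2 with ⟨h2, h2'⟩ | ⟨h2, h2'⟩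
    · exact h1.symm.trans h2
    · rw [h2] at h1'; rw [h1] at h2'; exact absurd h1' (lt_asymm h2')
    · rw [h2] at h1'; rw [h1] at h2'; exact absurd h1' (lt_asymm h2')
    · exact h1.symm.trans h2
  let D : {w : G.V → R // w ρ = 0} → {v : G.V // v ≠ ρ} → R :=
    fun w v => w.1 (G.t (e v)) - w.1 (G.s (e v))
  have hD : Function.Injective D := by
    intro w w' h
    have hall : ∀ (n : ℕ) (v : G.V), G.adjGraph.dist v ρ = n → w.1 v = w'.1 v := by
      intro n
      induction n using Nat.strong_induction_on with
      | _ n ih =>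
        intro v hv
        by_cases hvρ : v = ρ
        · rw [hvρ, w.2, w'.2]
        · have hd := congrFun h ⟨v, hvρ⟩
          simp only [D] at hd
          rcases he ⟨v, hvρ⟩ with ⟨h1, h2⟩ | ⟨h1, h2⟩
          · have := ih _ (hv ▸ h2) _ rfl
            rw [h1, this] at hd
            exact sub_left_injective hd
          · have := ih _ (hv ▸ h2) _ rfl
            rw [h1, this] at hd
            exact sub_right_injective hd
    exact Subtype.ext (funext fun v => hall _ v rfl)
  calc ∑ w : {w : G.V → R // w ρ = 0}, ∏ a, f (w.1 (G.t a) - w.1 (G.s a))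
      ≤ ∑ w : {w : G.V → R // w ρ = 0}, ∏ v, f (D w v) := by
        refine Finset.sum_le_sum fun w _ => ?_
        have him : ∏ v, f (D w v) =
            ∏ a ∈ Finset.univ.image e, f (w.1 (G.t a) - w.1 (G.s a)) :=
          (Finset.prod_image (f := fun a => f (w.1 (G.t a) - w.1 (G.s a)))
            fun _ _ _ _ h => hinj h).symm
        rw [him]
        exact Finset.prod_le_prod_of_subset_of_le_one (Finset.subset_univ _)
          (fun _ _ => h0 _) fun _ _ _ => h1 _
    _ = ∑ d ∈ Finset.univ.image D, ∏ v, f (d v) :=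
        (Finset.sum_image (f := fun d => ∏ v, f (d v)) fun _ _ _ _ h => hD h).symm
    _ ≤ ∑ d : {v : G.V // v ≠ ρ} → R, ∏ v, f (d v) :=
        Finset.sum_le_sum_of_subset_of_nonneg (Finset.subset_univ _)
          fun d _ _ => Finset.prod_nonneg fun _ _ => h0 _
    _ = (∑ r, f r) ^ (Fintype.card G.V - 1) := by
        rw [← Fintype.piFinset_univ, ← Finset.prod_univ_sum (fun _ => Finset.univ)
          (fun _ r => f r)]
        simp [Fintype.card_subtype_compl]

open Classical in
theorem FinQuiver.sum_prod_erase_le {G : FinQuiver} {e : G.E} (hG : (G.deleteEdge e).Connected)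
    {R : Type} [CommRing R] [Fintype R] (ρ : G.V) (f : R → ℝ) (h0 : ∀ r, 0 ≤ f r)
    (h1 : ∀ r, f r ≤ 1) :
    ∑ w : {w : G.V → R // w ρ = 0}, ∏ a ∈ Finset.univ.erase e, f (w.1 (G.t a) - w.1 (G.s a)) ≤
      (∑ r, f r) ^ (Fintype.card G.V - 1) := by
  refine le_trans (le_of_eq ?_) (FinQuiver.Connected.sum_prod_le hG ρ f h0 h1)
  refine Finset.sum_congr rfl fun w _ => ?_
  exact Finset.prod_subtype (p := fun a => a ≠ e) _ (by simp)
    (fun a => f (w.1 (G.t a) - w.1 (G.s a)))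

open Polynomial in
theorem truncRing_mk_eq_zero {F : Type} [Field F] {k : ℕ} {p : F[X]} :
    (Ideal.Quotient.mk (Ideal.span {(X : F[X]) ^ k}) p) = 0 ↔ X ^ k ∣ p := by
  rw [Ideal.Quotient.eq_zero_iff_mem, Ideal.mem_span_singleton]

instance truncRing_finite (F : Type) [Field F] [Finite F] (k : ℕ) : Finite (TruncRing F k) := by
  have : Module.Finite F (AdjoinRoot ((Polynomial.X : Polynomial F) ^ k)) :=
    (Polynomial.monic_X_pow k).finite_adjoinRoot
  exact Module.finite_of_finite (M := AdjoinRoot ((Polynomial.X : Polynomial F) ^ k)) F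

theorem truncRing_card (F : Type) [Field F] [Finite F] (k : ℕ) :
    Nat.card (TruncRing F k) = Nat.card F ^ k := by
  rw [Module.natCard_eq_pow_finrank (K := F), finrank_quotient_span_eq_natDegree,
    Polynomial.natDegree_X_pow]

open Polynomial in
/-- Multiplication by `t`, as an embedding of `F[t]/(t^k)` into `F[t]/(t^(k+1))`. -/
noncomputable def truncShift (F : Type) [Field F] (k : ℕ) : TruncRing F k →+ TruncRing F (k + 1) :=
  QuotientAddGroup.map _ _ (AddMonoidHom.mulLeft (X : F[X])) (by
    intro p hp
    change X * p ∈ Ideal.span {X ^ (k + 1)}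
    change p ∈ Ideal.span {X ^ k} at hp
    rw [Ideal.mem_span_singleton] at hp ⊢
    rw [pow_succ']
    exact mul_dvd_mul_left X hp)

open Polynomial in
theorem truncShift_mk {F : Type} [Field F] {k : ℕ} (p : F[X]) :
    truncShift F k (Ideal.Quotient.mk _ p) = Ideal.Quotient.mk _ (X * p) := rfl

/-- Truncation `F[t]/(t^(k+1)) → F[t]/(t^k)`. -/
noncomputable def truncProj (F : Type) [Field F] (k : ℕ) : TruncRing F (k + 1) →+* TruncRing F k :=
  Ideal.Quotient.factor (by
    rw [Ideal.span_singleton_le_span_singleton]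
    exact pow_dvd_pow _ (Nat.le_succ k))

open Polynomial in
theorem truncProj_mk {F : Type} [Field F] {k : ℕ} (p : F[X]) :
    truncProj F k (Ideal.Quotient.mk _ p) = Ideal.Quotient.mk _ p := rfl

theorem truncProj_surjective (F : Type) [Field F] (k : ℕ) :
    Function.Surjective (truncProj F k) := Ideal.Quotient.factor_surjective _

theorem truncShift_injective (F : Type) [Field F] (k : ℕ) :
    Function.Injective (truncShift F k) := by
  rw [injective_iff_map_eq_zero]
  intro r hr
  obtain ⟨p, rfl⟩ := Ideal.Quotient.mk_surjective r
  rw [truncShift_mk, truncRing_mk_eq_zero, pow_succ'] at hr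
  rw [truncRing_mk_eq_zero]
  exact (mul_dvd_mul_iff_left Polynomial.X_ne_zero).1 hr

theorem mul_truncShift (F : Type) [Field F] (k : ℕ) (z : TruncRing F (k + 1))
    (r : TruncRing F k) : z * truncShift F k r = truncShift F k (truncProj F k z * r) := by
  obtain ⟨p, rfl⟩ := Ideal.Quotient.mk_surjective r
  obtain ⟨s, rfl⟩ := Ideal.Quotient.mk_surjective z
  rw [truncProj_mk, truncShift_mk, ← map_mul, ← map_mul, truncShift_mk]
  congr 1
  ring

open Polynomial in
theorem isUnit_iff_notMem_range_truncShift {F : Type} [Field F] {k : ℕ}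
    (r : TruncRing F (k + 1)) : IsUnit r ↔ r ∉ Set.range (truncShift F k) := by
  constructor
  · rintro hu ⟨r, rfl⟩
    obtain ⟨p, rfl⟩ := Ideal.Quotient.mk_surjective r
    obtain ⟨z, hz⟩ := hu.exists_left_inv
    obtain ⟨s, rfl⟩ := Ideal.Quotient.mk_surjective z
    rw [truncShift_mk, ← map_mul, ← map_one (Ideal.Quotient.mk _), ← sub_eq_zero, ← map_sub,
      truncRing_mk_eq_zero] at hz
    have h1 : (X : F[X]) ∣ s * (X * p) - 1 := (dvd_pow_self X (Nat.succ_ne_zero k)).trans hz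
    have h2 : (X : F[X]) ∣ 1 := by
      have h3 : (X : F[X]) ∣ s * (X * p) := ⟨s * p, by ring⟩
      simpa using dvd_sub h3 h1
    exact Polynomial.not_isUnit_X (isUnit_of_dvd_one h2)
  · intro h
    obtain ⟨p, rfl⟩ := Ideal.Quotient.mk_surjective r
    have hp : ¬ (X : F[X]) ∣ p := by
      rintro ⟨s, rfl⟩
      exact h ⟨Ideal.Quotient.mk _ s, truncShift_mk s⟩
    have hc : IsCoprime ((X : F[X]) ^ (k + 1)) p :=
      (((Polynomial.irreducible_X).coprime_iff_not_dvd).2 hp).pow_left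
    obtain ⟨a, b, hab⟩ := hc
    refine IsUnit.of_mul_eq_one (Ideal.Quotient.mk _ b) ?_
    rw [← map_mul, ← map_one (Ideal.Quotient.mk _), ← sub_eq_zero, ← map_sub,
      truncRing_mk_eq_zero]
    exact ⟨-a, by linear_combination hab⟩

instance truncRing_nontrivial (F : Type) [Field F] (k : ℕ) : Nontrivial (TruncRing F (k + 1)) := by
  refine Ideal.Quotient.nontrivial_iff.2 fun h => ?_
  rw [Ideal.span_singleton_eq_top, isUnit_pow_succ_iff] at h
  exact Polynomial.not_isUnit_X h

instance truncRing_isLocalRing (F : Type) [Field F] (k : ℕ) :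
    IsLocalRing (TruncRing F (k + 1)) := by
  refine IsLocalRing.of_nonunits_add fun a b ha hb => ?_
  rw [mem_nonunits_iff, isUnit_iff_notMem_range_truncShift, not_not] at ha hb ⊢
  obtain ⟨x, rfl⟩ := ha
  obtain ⟨y, rfl⟩ := hb
  exact ⟨x + y, map_add _ _ _⟩

/-- `F[t]/(t^(k+1))` is the disjoint union of its units and the multiples of `t`. -/
theorem truncRing_sum_bijective (F : Type) [Field F] (k : ℕ) : Function.Bijective
    (Sum.elim (fun u => (u : TruncRing F (k + 1))) (truncShift F k) :
      (TruncRing F (k + 1))ˣ ⊕ TruncRing F k → TruncRing F (k + 1)) := by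
  refine ⟨Units.val_injective.sumElim (truncShift_injective F k) fun u r h => ?_, fun r => ?_⟩
  · exact (isUnit_iff_notMem_range_truncShift _).1 u.isUnit ⟨r, h.symm⟩
  · by_cases hr : IsUnit r
    · exact ⟨Sum.inl hr.unit, rfl⟩
    · rw [isUnit_iff_notMem_range_truncShift, not_not] at hr
      obtain ⟨z, rfl⟩ := hr
      exact ⟨Sum.inr z, rfl⟩

theorem truncRing_card_units (F : Type) [Field F] [Finite F] (k : ℕ) :
    Nat.card (TruncRing F (k + 1))ˣ + Nat.card F ^ k = Nat.card F ^ (k + 1) := by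
  rw [← truncRing_card, ← truncRing_card, ← Nat.card_sum]
  exact Nat.card_congr (Equiv.ofBijective _ (truncRing_sum_bijective F k))

theorem annDensity_eq_inv_index {R : Type} [CommRing R] [Finite R] (r : R) :
    annDensity R r = ((AddMonoidHom.mulRight r).ker.index : ℝ)⁻¹ := by
  have h := AddSubgroup.card_mul_index (AddMonoidHom.mulRight r).ker
  have hc : Nat.card (AddMonoidHom.mulRight r).ker = Nat.card {z : R // z * r = 0} := rfl
  have h0 : (Nat.card {z : R // z * r = 0} : ℝ) ≠ 0 := by
    rw [← hc]; exact_mod_cast Nat.card_pos.ne'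
  rw [annDensity, ← h, hc, Nat.cast_mul, div_mul_eq_div_div, div_self h0, one_div]

theorem annDensity_truncShift (F : Type) [Field F] [Finite F] (k : ℕ) (r : TruncRing F k) :
    annDensity (TruncRing F (k + 1)) (truncShift F k r) = annDensity (TruncRing F k) r := by
  rw [annDensity_eq_inv_index, annDensity_eq_inv_index,
    ← AddSubgroup.index_comap_of_surjective (f := (truncProj F k).toAddMonoidHom) _
      (truncProj_surjective F k)]
  congr 3
  ext z
  change z * truncShift F k r = 0 ↔ truncProj F k z * r = 0
  rw [mul_truncShift, map_eq_zero_iff _ (truncShift_injective F k)]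

theorem annDensity_of_isUnit {R : Type} [CommRing R] {r : R} (hr : IsUnit r) :
    annDensity R r = (Nat.card R : ℝ)⁻¹ := by
  have : Nat.card {z : R // z * r = 0} = 1 := by
    rw [Nat.card_eq_one_iff_unique]
    refine ⟨⟨fun a b => Subtype.ext ?_⟩, ⟨0, zero_mul r⟩⟩
    rw [hr.mul_left_eq_zero.1 a.2, hr.mul_left_eq_zero.1 b.2]
  rw [annDensity, this, Nat.cast_one, one_div]

theorem annDensity_nonneg {R : Type} [CommRing R] (r : R) : 0 ≤ annDensity R r := by
  unfold annDensity; positivity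

theorem annDensity_le_one {R : Type} [CommRing R] [Finite R] (r : R) : annDensity R r ≤ 1 := by
  refine div_le_one_of_le₀ ?_ (Nat.cast_nonneg _)
  exact_mod_cast Nat.card_le_card_of_injective _ Subtype.val_injective

open Polynomial in
/-- The top power of `t` lies in every nonzero ideal of `F[t]/(t^(k+1))`. -/
theorem exists_mul_eq_top_power (F : Type) [Field F] (k : ℕ) (r : TruncRing F (k + 1))
    (hr : r ≠ 0) : ∃ z, r * z = Ideal.Quotient.mk _ (X ^ k) := by
  by_cases hu : IsUnit r
  · obtain ⟨u, rfl⟩ := hu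
    exact ⟨_, u.mul_inv_cancel_left _⟩
  · rw [isUnit_iff_notMem_range_truncShift, not_not] at hu
    obtain ⟨r, rfl⟩ := hu
    have hr' : r ≠ 0 := by rintro rfl; exact hr (map_zero _)
    cases k with
    | zero =>
      obtain ⟨p, rfl⟩ := Ideal.Quotient.mk_surjective r
      exact absurd (truncRing_mk_eq_zero.2 (by simp)) hr'
    | succ k =>
      obtain ⟨z, hz⟩ := exists_mul_eq_top_power F k r hr'
      obtain ⟨y, rfl⟩ := truncProj_surjective F (k + 1) z
      refine ⟨y, ?_⟩
      rw [mul_comm, mul_truncShift, mul_comm, hz, truncShift_mk, pow_succ' X k]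

open Polynomial in
theorem exists_isPrimitive_truncRing (F : Type) [Field F] [Finite F] (k : ℕ) :
    ∃ ψ : AddChar (TruncRing F (k + 1)) ℂ, ψ.IsPrimitive := by
  have htop : (Ideal.Quotient.mk _ (X ^ k) : TruncRing F (k + 1)) ≠ 0 := by
    rw [Ne, truncRing_mk_eq_zero, pow_dvd_pow_iff X_ne_zero not_isUnit_X]
    lia
  obtain ⟨ψ, hψ⟩ := AddChar.exists_apply_ne_zero.2 htop
  refine ⟨ψ, fun r hr h => hψ ?_⟩
  obtain ⟨z, hz⟩ := exists_mul_eq_top_power F k r hr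
  rw [← hz, ← AddChar.mulShift_apply, h, AddChar.one_apply]

noncomputable instance truncRing_fintype (F : Type) [Field F] [Finite F] (k : ℕ) :
    Fintype (TruncRing F k) := Fintype.ofFinite _

open Classical in
theorem sum_annDensity_le (F : Type) [Field F] [Finite F] (k : ℕ) :
    ∑ r : TruncRing F k, annDensity (TruncRing F k) r ≤ k + 1 := by
  induction k with
  | zero =>
    refine (Finset.sum_le_sum fun r _ => annDensity_le_one r).trans ?_
    have : Fintype.card (TruncRing F 0) = 1 := by
      rw [← Nat.card_eq_fintype_card, truncRing_card, pow_zero]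
    simp [this]
  | succ k ih =>
    rw [← (truncRing_sum_bijective F k).sum_comp, Fintype.sum_sum_type]
    simp only [Sum.elim_inl, Sum.elim_inr, annDensity_truncShift,
      fun u : (TruncRing F (k + 1))ˣ => annDensity_of_isUnit u.isUnit]
    rw [Finset.sum_const, nsmul_eq_mul, add_comm]
    push_cast
    refine add_le_add ih ?_
    rw [← div_eq_mul_inv]
    refine div_le_one_of_le₀ ?_ (Nat.cast_nonneg _)
    rw [Finset.card_univ, ← Nat.card_eq_fintype_card]
    exact_mod_cast Nat.card_le_card_of_injective _ Units.val_injective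

open Classical in
/-- The normalised count of pairs of a representation and a rooted potential killed by it. -/
noncomputable def potentialSum (G : FinQuiver) (ρ : G.V) (F : Type) [Field F] [Finite F]
    (k : ℕ) : ℝ :=
  ∑ w : {w : G.V → TruncRing F k // w ρ = 0},
    ∏ a, annDensity (TruncRing F k) (w.1 (G.t a) - w.1 (G.s a))

/-- The bound on the increments of `potentialSum`. -/
noncomputable def potentialBound (G : FinQuiver) (F : Type) (k : ℕ) : ℝ :=
  Fintype.card G.E * ((k + 1 : ℝ) ^ (Fintype.card G.V - 1) * ((Nat.card F : ℝ)⁻¹) ^ k)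

open Classical in
theorem sum_inv_mul_prod_erase_le (G : FinQuiver) (h2 : G.TwoConnected) (ρ : G.V) (F : Type)
    [Field F] [Finite F] (k : ℕ) :
    ∑ e : G.E, (Nat.card (TruncRing F k) : ℝ)⁻¹ * ∑ w : {w : G.V → TruncRing F k // w ρ = 0},
      ∏ a ∈ Finset.univ.erase e, annDensity (TruncRing F k) (w.1 (G.t a) - w.1 (G.s a)) ≤
      potentialBound G F k := by
  rw [potentialBound, ← nsmul_eq_mul, ← Finset.card_univ, ← Finset.sum_const]
  refine Finset.sum_le_sum fun e _ => ?_
  rw [mul_comm, truncRing_card, Nat.cast_pow, inv_pow]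
  refine mul_le_mul_of_nonneg_right ?_ (by positivity)
  refine (FinQuiver.sum_prod_erase_le (h2.2 e) ρ _ annDensity_nonneg annDensity_le_one).trans ?_
  exact pow_le_pow_left₀ (Finset.sum_nonneg fun _ _ => annDensity_nonneg _)
    (sum_annDensity_le F k) _

open Classical in
theorem potentialSum_succ (G : FinQuiver) (h2 : G.TwoConnected) (ρ : G.V) (F : Type)
    [Field F] [Finite F] (k : ℕ) :
    potentialSum G ρ F k ≤ potentialSum G ρ F (k + 1) ∧
      potentialSum G ρ F (k + 1) ≤ potentialSum G ρ F k + potentialBound G F (k + 1) := by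
  let j : {w : G.V → TruncRing F k // w ρ = 0} → {w : G.V → TruncRing F (k + 1) // w ρ = 0} :=
    fun w => ⟨fun i => truncShift F k (w.1 i), by
      change truncShift F k (w.1 ρ) = 0
      rw [w.2, map_zero]⟩
  have hj : Function.Injective j := by
    intro w w' h
    refine Subtype.ext (funext fun i => truncShift_injective F k ?_)
    exact congrFun (congrArg Subtype.val h) i
  let P : {w : G.V → TruncRing F (k + 1) // w ρ = 0} → ℝ :=
    fun w => ∏ a, annDensity (TruncRing F (k + 1)) (w.1 (G.t a) - w.1 (G.s a))
  have hP : ∀ w, 0 ≤ P w := fun w => Finset.prod_nonneg fun _ _ => annDensity_nonneg _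
  have himage : potentialSum G ρ F k = ∑ w ∈ Finset.univ.image j, P w := by
    rw [Finset.sum_image fun _ _ _ _ h => hj h, potentialSum]
    refine Finset.sum_congr rfl fun w _ => Finset.prod_congr rfl fun a _ => ?_
    rw [← annDensity_truncShift, map_sub]
  have hsplit : potentialSum G ρ F (k + 1) =
      potentialSum G ρ F k + ∑ w ∈ (Finset.univ.image j)ᶜ, P w := by
    rw [himage, Finset.sum_add_sum_compl]; rfl
  rw [hsplit]
  refine ⟨le_add_of_nonneg_right (Finset.sum_nonneg fun w _ => hP w), ?_⟩
  refine add_le_add le_rfl (le_trans ?_ (sum_inv_mul_prod_erase_le G h2 ρ F (k + 1)))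
  simp_rw [Finset.mul_sum]
  rw [Finset.sum_comm]
  have hterm : ∀ (w : {w : G.V → TruncRing F (k + 1) // w ρ = 0}) (e : G.E),
      0 ≤ (Nat.card (TruncRing F (k + 1)) : ℝ)⁻¹ * ∏ a ∈ Finset.univ.erase e,
        annDensity (TruncRing F (k + 1)) (w.1 (G.t a) - w.1 (G.s a)) := fun w e =>
    mul_nonneg (by positivity) (Finset.prod_nonneg fun _ _ => annDensity_nonneg _)
  refine le_trans (Finset.sum_le_sum fun w hw => ?_)
    (Finset.sum_le_sum_of_subset_of_nonneg (Finset.subset_univ _)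
      fun w _ _ => Finset.sum_nonneg fun e _ => hterm w e)
  obtain ⟨e, he⟩ : ∃ e, IsUnit (w.1 (G.t e) - w.1 (G.s e)) := by
    by_contra! hcon
    have hrange : ∀ i, w.1 i ∈ (truncShift F k).range := by
      refine h2.1.vertex_induction (ρ := ρ) (by rw [w.2]; exact zero_mem _) fun a => ?_
      have ha : w.1 (G.t a) - w.1 (G.s a) ∈ (truncShift F k).range := by
        have := hcon a
        rwa [isUnit_iff_notMem_range_truncShift, not_not] at this
      exact ⟨fun h => by simpa using add_mem ha h, fun h => by simpa using sub_mem h ha⟩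
    choose v hv using hrange
    refine Finset.mem_compl.1 hw (Finset.mem_image.2 ⟨⟨v, ?_⟩, Finset.mem_univ _, ?_⟩)
    · exact truncShift_injective F k (by rw [hv, w.2, map_zero])
    · exact Subtype.ext (funext hv)
  refine le_trans (le_of_eq ?_) (Finset.single_le_sum (fun e _ => hterm w e) (Finset.mem_univ e))
  rw [← annDensity_of_isUnit he]
  exact (Finset.mul_prod_erase _ (fun a => annDensity (TruncRing F (k + 1))
    (w.1 (G.t a) - w.1 (G.s a))) (Finset.mem_univ e)).symm

theorem summable_potentialBound (G : FinQuiver) (F : Type) [Field F] [Finite F] :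
    Summable (potentialBound G F) := by
  have hq : (1 : ℝ) < Nat.card F := by exact_mod_cast Finite.one_lt_card
  have hlt : ‖((Nat.card F : ℝ)⁻¹)‖ < 1 := by
    rw [Real.norm_of_nonneg (by positivity)]
    exact inv_lt_one_of_one_lt₀ hq
  have hinv : (Nat.card F : ℝ) * (Nat.card F : ℝ)⁻¹ = 1 := mul_inv_cancel₀ (by positivity)
  have hgeom : Summable fun k : ℕ =>
      (k : ℝ) ^ (Fintype.card G.V - 1) * ((Nat.card F : ℝ)⁻¹) ^ k :=
    summable_pow_mul_geometric_of_norm_lt_one (Fintype.card G.V - 1) hlt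
  have heq : potentialBound G F = fun k : ℕ => ((Fintype.card G.E : ℝ) * Nat.card F) *
      (((k + 1 : ℕ) : ℝ) ^ (Fintype.card G.V - 1) * ((Nat.card F : ℝ)⁻¹) ^ (k + 1)) := by
    funext k
    rw [potentialBound, pow_succ _ k, Nat.cast_add_one]
    linear_combination -(Fintype.card G.E * ((k + 1 : ℝ) ^ (Fintype.card G.V - 1) *
      ((Nat.card F : ℝ)⁻¹) ^ k)) * hinv
  rw [heq]
  exact ((summable_nat_add_iff 1).2 hgeom).mul_left _

theorem potentialBound_nonneg (G : FinQuiver) (F : Type) (k : ℕ) : 0 ≤ potentialBound G F k := by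
  unfold potentialBound; positivity

theorem exists_tendsto_potentialSum (G : FinQuiver) (h2 : G.TwoConnected) (ρ : G.V) (F : Type)
    [Field F] [Finite F] :
    ∃ L, Filter.Tendsto (potentialSum G ρ F) Filter.atTop (nhds L) := by
  have hsum : Summable fun k => potentialBound G F (k + 1) :=
    (summable_nat_add_iff 1).2 (summable_potentialBound G F)
  have hle : ∀ k, potentialSum G ρ F k ≤
      potentialSum G ρ F 0 + ∑ i ∈ Finset.range k, potentialBound G F (i + 1) := by
    intro k
    induction k with
    | zero => simp
    | succ k ih =>
      rw [Finset.sum_range_succ]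
      linarith [(potentialSum_succ G h2 ρ F k).2]
  refine ⟨_, tendsto_atTop_ciSup
    (monotone_nat_of_le_succ fun k => (potentialSum_succ G h2 ρ F k).1) ?_⟩
  refine ⟨potentialSum G ρ F 0 + ∑' i, potentialBound G F (i + 1), ?_⟩
  rintro _ ⟨k, rfl⟩
  refine (hle k).trans (add_le_add le_rfl ?_)
  exact hsum.sum_le_tsum _ fun i _ => potentialBound_nonneg G F _

open Classical in
theorem sum_rootedKer_truncRing (G : FinQuiver) (ρ : G.V) (F : Type) [Field F] [Finite F]
    (k : ℕ) : ∑ x : G.E → TruncRing F k, (G.rootedKer (TruncRing F k) ρ x : ℝ) =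
      ((Nat.card F : ℝ) ^ k) ^ Fintype.card G.E * potentialSum G ρ F k := by
  rw [sum_rootedKer, truncRing_card, Nat.cast_pow, potentialSum]

open Classical in
/-- Representations with disconnected support contribute negligibly. -/
theorem sum_rootedKer_connected_bounds (G : FinQuiver) (h2 : G.TwoConnected) (ρ : G.V) (F : Type)
    [Field F] [Finite F] (k : ℕ) :
    |(∑ x : {x : G.E → TruncRing F k // (G.restrictE {a | x a ≠ 0}).Connected},
        (G.rootedKer (TruncRing F k) ρ x.1 : ℝ)) / ((Nat.card F : ℝ) ^ k) ^ Fintype.card G.E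
      - potentialSum G ρ F k| ≤ potentialBound G F k := by
  set K : (G.E → TruncRing F k) → ℝ := fun x => (G.rootedKer (TruncRing F k) ρ x : ℝ) with hK
  have hK0 : ∀ x, 0 ≤ K x := fun x => Nat.cast_nonneg _
  have hq : (0 : ℝ) < Nat.card F := by exact_mod_cast Nat.card_pos
  have hpos : (0 : ℝ) < ((Nat.card F : ℝ) ^ k) ^ Fintype.card G.E := by positivity
  have hsplit := Fintype.sum_subtype_add_sum_subtype
    (fun x : G.E → TruncRing F k => (G.restrictE {a | x a ≠ 0}).Connected) K
  have htot : ∑ x, K x = ((Nat.card F : ℝ) ^ k) ^ Fintype.card G.E * potentialSum G ρ F k :=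
    sum_rootedKer_truncRing G ρ F k
  have hnon : ∑ x : {x : G.E → TruncRing F k // ¬ (G.restrictE {a | x a ≠ 0}).Connected}, K x.1 ≤
      ((Nat.card F : ℝ) ^ k) ^ Fintype.card G.E * potentialBound G F k := by
    calc _ = ∑ x, if ¬ (G.restrictE {a | x a ≠ 0}).Connected then K x else 0 := by
          rw [← Finset.sum_filter]
          exact (Finset.sum_subtype _ (by simp) _).symm
      _ ≤ ∑ x, ∑ e : G.E, if x e = 0 then K x else 0 := by
          refine Finset.sum_le_sum fun x _ => ?_
          have h0 : ∀ e ∈ (Finset.univ : Finset G.E), 0 ≤ if x e = 0 then K x else 0 := by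
            intro e _; split_ifs; exacts [hK0 x, le_rfl]
          split_ifs with hx
          · exact Finset.sum_nonneg h0
          · obtain ⟨e, he⟩ : ∃ e, x e = 0 := by
              by_contra! hcon
              exact hx (FinQuiver.restrictE_connected_of_forall h2.1 hcon)
            refine le_trans (le_of_eq ?_) (Finset.single_le_sum h0 (Finset.mem_univ e))
            rw [if_pos he]
      _ = ((Nat.card F : ℝ) ^ k) ^ Fintype.card G.E * ∑ e : G.E,
            (Nat.card (TruncRing F k) : ℝ)⁻¹ * ∑ w : {w : G.V → TruncRing F k // w ρ = 0},
            ∏ a ∈ Finset.univ.erase e,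
              annDensity (TruncRing F k) (w.1 (G.t a) - w.1 (G.s a)) := by
          rw [Finset.sum_comm, Finset.mul_sum]
          refine Finset.sum_congr rfl fun e _ => ?_
          have h := sum_rootedKer_of_eq_zero G (TruncRing F k) ρ e
          have hc : (Nat.card (TruncRing F k) : ℝ) ≠ 0 := by exact_mod_cast Nat.card_pos.ne'
          rw [mul_left_comm, eq_inv_mul_iff_mul_eq₀ hc, h, truncRing_card, Nat.cast_pow]
      _ ≤ _ := mul_le_mul_of_nonneg_left (sum_inv_mul_prod_erase_le G h2 ρ F k) hpos.le
  have hnon0 : 0 ≤ ∑ x : {x : G.E → TruncRing F k //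
      ¬ (G.restrictE {a | x a ≠ 0}).Connected}, K x.1 := Finset.sum_nonneg fun x _ => hK0 x.1
  rw [abs_le]
  constructor
  · rw [neg_le_sub_iff_le_add, ← sub_le_iff_le_add, le_div_iff₀ hpos]
    linarith
  · rw [sub_le_iff_le_add, div_le_iff₀ hpos]
    nlinarith [potentialBound_nonneg G F k]

theorem FinQuiver.Connected.betti_eq {G : FinQuiver} (hG : G.Connected) :
    G.betti = 1 - Fintype.card G.V + Fintype.card G.E := by
  have : G.c = 1 := by
    rw [FinQuiver.c, Nat.card_eq_one_iff_unique]
    have hn := hG.nonempty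
    exact ⟨hG.preconnected.subsingleton_connectedComponent, inferInstance⟩
  rw [FinQuiver.betti, this, Nat.cast_one]

theorem bCount_truncRing (G : FinQuiver) (ρ : G.V) (F : Type) [Field F] [Finite F] (k : ℕ) :
    (Nat.card F : ℝ) ^
        (-((k + 1 : ℕ) : ℤ) * (2 * (Fintype.card G.E : ℤ) - (Fintype.card G.V : ℤ) + 1)) *
      (BCount G (TruncRing F (k + 1)) : ℝ) = potentialSum G ρ F (k + 1) := by
  obtain ⟨ψ, hψ⟩ := exists_isPrimitive_truncRing F k
  have h := congrArg (Nat.cast : ℕ → ℝ) (bCount_mul G (TruncRing F (k + 1)) ρ hψ)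
  push_cast at h
  have hq : (Nat.card F : ℝ) ≠ 0 := by exact_mod_cast Nat.card_pos.ne'
  have hs := sum_rootedKer_truncRing G ρ F (k + 1)
  rw [hs, truncRing_card, Nat.cast_pow] at h
  rw [neg_mul, zpow_neg, inv_mul_eq_iff_eq_mul₀ (zpow_ne_zero _ hq), zpow_mul, zpow_natCast,
    zpow_add₀ (pow_ne_zero _ hq), zpow_sub₀ (pow_ne_zero _ hq), two_mul,
    zpow_add₀ (pow_ne_zero _ hq), zpow_natCast, zpow_natCast, zpow_one, eq_comm]
  field_simp
  linear_combination -h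

theorem kacCount_truncRing (G : FinQuiver) (hG : G.Connected) (ρ : G.V) (F : Type) [Field F]
    [Finite F] (k : ℕ) [Fintype {x : G.E → TruncRing F (k + 1) //
      (G.restrictE {a | x a ≠ 0}).Connected}] :
    (Nat.card F : ℝ) ^ (-((k + 1 : ℕ) : ℤ) * G.betti) *
      (KacCount G (TruncRing F (k + 1)) : ℝ) =
    (∑ x : {x : G.E → TruncRing F (k + 1) // (G.restrictE {a | x a ≠ 0}).Connected},
        (G.rootedKer (TruncRing F (k + 1)) ρ x.1 : ℝ)) /
          ((Nat.card F : ℝ) ^ (k + 1)) ^ Fintype.card G.E /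
      (1 - (Nat.card F : ℝ)⁻¹) ^ (Fintype.card G.V - 1) := by
  have h := congrArg (Nat.cast : ℕ → ℝ) (kacCount_mul G (TruncRing F (k + 1)) ρ)
  push_cast at h
  have hq1 : (1 : ℝ) < Nat.card F := by exact_mod_cast Finite.one_lt_card
  have hq : (Nat.card F : ℝ) ≠ 0 := by positivity
  have hq' : 1 - (Nat.card F : ℝ)⁻¹ ≠ 0 := (sub_pos.2 (inv_lt_one_of_one_lt₀ hq1)).ne'
  have hU : (Nat.card (TruncRing F (k + 1))ˣ : ℝ) =
      (Nat.card F : ℝ) ^ (k + 1) * (1 - (Nat.card F : ℝ)⁻¹) := by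
    have := congrArg (Nat.cast : ℕ → ℝ) (truncRing_card_units F k)
    push_cast at this
    rw [eq_sub_of_add_eq this]
    field_simp
    ring
  obtain ⟨n, hn⟩ : ∃ n, Fintype.card G.V = n + 1 :=
    ⟨_, (Nat.succ_pred_eq_of_pos (Fintype.card_pos_iff.2 ⟨ρ⟩)).symm⟩
  rw [hG.betti_eq]
  rw [hU, hn] at h
  rw [hn, Nat.add_sub_cancel]
  have hsum : (∑ x : {x : G.E → TruncRing F (k + 1) // (G.restrictE {a | x a ≠ 0}).Connected},
        (G.rootedKer (TruncRing F (k + 1)) ρ x.1 : ℝ)) =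
      (KacCount G (TruncRing F (k + 1)) : ℝ) *
        ((Nat.card F : ℝ) ^ (k + 1) * (1 - (Nat.card F : ℝ)⁻¹)) ^ n := by
    have hne : (Nat.card F : ℝ) ^ (k + 1) * (1 - (Nat.card F : ℝ)⁻¹) ≠ 0 :=
      mul_ne_zero (pow_ne_zero _ hq) hq'
    apply mul_left_cancel₀ hne
    rw [mul_left_comm, ← pow_succ', h]
    congr!
  have he : -((k + 1 : ℕ) : ℤ) * (1 - ((n + 1 : ℕ) : ℤ) + Fintype.card G.E) =
      ((k + 1 : ℕ) : ℤ) * (n - Fintype.card G.E) := by push_cast; ring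
  rw [hsum, he, zpow_mul, zpow_natCast, zpow_sub₀ (pow_ne_zero _ hq), zpow_natCast, zpow_natCast,
    mul_pow]
  generalize 1 - (Nat.card F : ℝ)⁻¹ = c at hq'
  field_simp

/-- Let `Q` be a finite quiver whose underlying multigraph is
2-connected, and let `q` be a prime power (the cardinality of a finite field `F`;
`R = 𝔽_q[t]/(t^α)`).  Then the real sequences `α ↦ q^{−α·b(Q)} · A_{(Q,α),1̲}(q)` and
`α ↦ q^{−α(2·#Q₁ − #Q₀ + 1)} · B_{(Q,α)}(q)` both converge as `α → ∞`, and their limits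
`A_Q` and `B_{μ_Q}` satisfy `B_{μ_Q}/(1 − q⁻¹)^{#Q₀} = A_Q/(1 − q⁻¹)`. -/
theorem wyss_limits_relation (G : FinQuiver) (h2 : G.TwoConnected)
    (F : Type) [Field F] [Fintype F] :
    ∃ AQ BQ : ℝ,
      Filter.Tendsto (fun α : ℕ =>
          (Fintype.card F : ℝ) ^ (-(α : ℤ) * G.betti) * (KacCount G (TruncRing F α) : ℝ))
        Filter.atTop (nhds AQ) ∧
      Filter.Tendsto (fun α : ℕ =>
          (Fintype.card F : ℝ) ^
              (-(α : ℤ) * (2 * (Fintype.card G.E : ℤ) - (Fintype.card G.V : ℤ) + 1)) *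
            (BCount G (TruncRing F α) : ℝ))
        Filter.atTop (nhds BQ) ∧
      BQ / (1 - (Fintype.card F : ℝ)⁻¹) ^ (Fintype.card G.V)
        = AQ / (1 - (Fintype.card F : ℝ)⁻¹) := by
  classical
  obtain ⟨ρ⟩ := h2.1.nonempty
  obtain ⟨L, hL⟩ := exists_tendsto_potentialSum G h2 ρ F
  have hcard : (Fintype.card F : ℝ) = Nat.card F := by rw [Nat.card_eq_fintype_card]
  rw [hcard]
  have hq1 : (1 : ℝ) < Nat.card F := by exact_mod_cast Finite.one_lt_card
  have hq' : 1 - (Nat.card F : ℝ)⁻¹ ≠ 0 := (sub_pos.2 (inv_lt_one_of_one_lt₀ hq1)).ne'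
  refine ⟨L / (1 - (Nat.card F : ℝ)⁻¹) ^ (Fintype.card G.V - 1), L, ?_, ?_, ?_⟩
  · rw [← Filter.tendsto_add_atTop_iff_nat 1]
    simp_rw [kacCount_truncRing G h2.1 ρ F]
    refine Filter.Tendsto.div_const ?_ _
    have hdiff := (squeeze_zero_norm (fun k => sum_rootedKer_connected_bounds G h2 ρ F k)
      (summable_potentialBound G F).tendsto_atTop_zero).add hL
    simp only [sub_add_cancel, zero_add] at hdiff
    exact (Filter.tendsto_add_atTop_iff_nat 1).2 hdiff
  · rw [← Filter.tendsto_add_atTop_iff_nat 1]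
    simp_rw [bCount_truncRing G ρ F]
    exact (Filter.tendsto_add_atTop_iff_nat 1).2 hL
  · obtain ⟨n, hn⟩ : ∃ n, Fintype.card G.V = n + 1 :=
      ⟨_, (Nat.succ_pred_eq_of_pos (Fintype.card_pos_iff.2 ⟨ρ⟩)).symm⟩
    rw [hn, Nat.add_sub_cancel, div_div, pow_succ]
end

section
/- Let Q be a 2-connected finite multigraph with at least one edge, so that d_E := b(Q) − b(Q|_E) ≥ 1 for every proper nonempty subset E ⊊ Q₁. In the field ℚ(X) of rational functions, set H := Σ over all chains ∅ ⊊ E₁ ⊊ ⋯ ⊊ E_k ⊊ Q₁ of proper nonempty subsets of Q₁ (k ≥ 0, the empty chain contributing the term 1) of ∏_{j=1}^{k} X^{d_{E_j}}/(1 − X^{d_{E_j}}). Then there exist a polynomial N ∈ ℤ[X] with non-negative coefficients, an integer s ≥ 0 and integers e₁,…,e_s ≥ 1 such that H = N(X)/∏_{i=1}^{s}(1 − X^{e_i}). (H is the specialisation u_E = X^{d_E} of the fine Hilbert series of the Stanley–Reisner ring of the order complex of the poset of proper nonempty subsets of Q₁.) -/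
/-- For a proper nonempty edge subset `E ⊊ Q₁`, the exponent `d_E := b(Q) − b(Q|_E)`. -/
noncomputable def dExp (G : FinQuiver) (E : Finset G.E) : ℤ :=
  G.betti - (G.restrictE (↑E : Set G.E)).betti

open Classical in
/-- The specialisation `u_E = X^{d_E}` of the fine Hilbert series of the Stanley–Reisner
ring of the order complex of the poset of proper nonempty subsets of `Q₁`: the sum over
all chains `∅ ⊊ E₁ ⊊ ⋯ ⊊ E_k ⊊ Q₁` of proper nonempty subsets of `Q₁` (a chain being
encoded by its underlying finite set of subsets; `k ≥ 0`, the empty chain contributing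
the term `1`) of `∏_{j=1}^{k} X^{d_{E_j}}/(1 − X^{d_{E_j}})`, inside `ℚ(X)`. -/
noncomputable def hilbertChainSum (G : FinQuiver) : RatFunc ℚ :=
  ∑ C ∈ Finset.univ.filter (fun C : Finset (Finset G.E) =>
      (∀ E ∈ C, E.Nonempty ∧ E ≠ Finset.univ) ∧
      IsChain (· ⊆ ·) (↑C : Set (Finset G.E))),
    ∏ E ∈ C, (RatFunc.X ^ (dExp G E)) / (1 - RatFunc.X ^ (dExp G E))

namespace FinQuiver

/-- Contracting the components of `Q|_J` in the connected multigraph `Q ∖ e` leaves a connected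
graph, whose edges come from the edges outside `J ∪ {e}`. -/
theorem c_restrictE_le (G : FinQuiver) (J : Set G.E) {e : G.E} (he : e ∉ J)
    (hconn : (G.deleteEdge e).Connected) :
    (G.restrictE J).c ≤ Nat.card ↥(Jᶜ : Set G.E) := by
  classical
  let K := (G.restrictE J).adjGraph
  let mk : G.V → K.ConnectedComponent := K.connectedComponentMk
  let edges : Set (Sym2 K.ConnectedComponent) :=
    (fun f => s(mk (G.s f), mk (G.t f))) '' (Jᶜ \ {e})
  let H : SimpleGraph K.ConnectedComponent := SimpleGraph.fromEdgeSet edges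
  have edge_reachable : ∀ f : G.E, f ≠ e → H.Reachable (mk (G.s f)) (mk (G.t f)) := by
    intro f hf
    by_cases heq : mk (G.s f) = mk (G.t f)
    · rw [heq]
    by_cases hJ : f ∈ J
    · refine absurd (SimpleGraph.ConnectedComponent.sound (SimpleGraph.Adj.reachable ?_)) heq
      refine (SimpleGraph.fromRel_adj _ _ _).2 ⟨fun h => heq (congrArg mk h), Or.inl ?_⟩
      exact ⟨⟨f, hJ⟩, rfl, rfl⟩
    · exact SimpleGraph.Adj.reachable
        ((SimpleGraph.fromEdgeSet_adj _).2 ⟨⟨f, ⟨hJ, hf⟩, rfl⟩, heq⟩)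
  have reachable_mk : ∀ u v : G.V, (G.deleteEdge e).adjGraph.Reachable u v →
      H.Reachable (mk u) (mk v) := by
    rintro u v ⟨p⟩
    induction p with
    | nil => exact SimpleGraph.Reachable.refl _
    | cons h _ ih =>
      refine SimpleGraph.Reachable.trans ?_ ih
      obtain ⟨-, ⟨f, rfl, rfl⟩ | ⟨f, rfl, rfl⟩⟩ := (SimpleGraph.fromRel_adj _ _ _).1 h
      · exact edge_reachable f.1 f.2
      · exact (edge_reachable f.1 f.2).symm
  have hH : H.Connected := by
    have : Nonempty K.ConnectedComponent := hconn.nonempty.map mk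
    refine ⟨fun x y => ?_⟩
    induction x using SimpleGraph.ConnectedComponent.ind with | _ u
    induction y using SimpleGraph.ConnectedComponent.ind with | _ v
    exact reachable_mk u v (hconn.preconnected u v)
  have : Finite K.ConnectedComponent := Quot.finite _
  calc (G.restrictE J).c ≤ Nat.card H.edgeSet + 1 := hH.card_vert_le_card_edgeSet_add_one
    _ ≤ (Jᶜ \ {e}).ncard + 1 := by
      gcongr
      rw [Nat.card_coe_set_eq, SimpleGraph.edgeSet_fromEdgeSet]
      exact (Set.ncard_le_ncard Set.sdiff_subset).trans (Set.ncard_image_le (Set.toFinite _))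
    _ = Nat.card ↥(Jᶜ : Set G.E) := by
      rw [Nat.card_coe_set_eq]
      exact Set.ncard_sdiff_singleton_add_one (by simpa using he)

theorem one_le_dExp (G : FinQuiver) (h2 : G.TwoConnected) (E : Finset G.E)
    (hE : E ≠ Finset.univ) : 1 ≤ dExp G E := by
  classical
  obtain ⟨e, he⟩ : ∃ e, e ∉ E := by
    by_contra! h
    exact hE (Finset.eq_univ_iff_forall.2 h)
  have hle := G.c_restrictE_le (↑E : Set G.E) (e := e) (by simpa using he) (h2.2 e)
  have hc : G.c = 1 := by
    have := h2.1.preconnected.subsingleton_connectedComponent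
    have : Nonempty G.adjGraph.ConnectedComponent :=
      h2.1.nonempty.map G.adjGraph.connectedComponentMk
    exact Nat.card_unique
  have hcompl : Nat.card ↥((↑E : Set G.E)ᶜ) + E.card = Fintype.card G.E := by
    rw [Nat.card_coe_set_eq, ← Finset.coe_compl, Set.ncard_coe_finset]
    exact Finset.card_compl_add_card E
  have hV : Fintype.card (G.restrictE (↑E : Set G.E)).V = Fintype.card G.V := rfl
  have hE' : Fintype.card (G.restrictE (↑E : Set G.E)).E = E.card := by
    rw [← Nat.card_eq_fintype_card]
    exact Nat.card_eq_card_toFinset (↑E : Set G.E) |>.trans (by simp)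
  unfold dExp betti
  rw [hc, hV, hE']
  omega

end FinQuiver

/-! ### Chain sums over Boolean lattices -/

section ChainSum

variable {α R : Type*}

open Classical in
/-- The chains of nonempty proper subsets of `S`. -/
noncomputable def properChains [Fintype α] (S : Finset α) : Finset (Finset (Finset α)) :=
  Finset.univ.filter fun C => (∀ E ∈ C, E.Nonempty ∧ E ⊂ S) ∧
    IsChain (· ⊆ ·) (↑C : Set (Finset α))

theorem mem_properChains [Fintype α] {S : Finset α} {C : Finset (Finset α)} :
    C ∈ properChains S ↔
      (∀ E ∈ C, E.Nonempty ∧ E ⊂ S) ∧ IsChain (· ⊆ ·) (↑C : Set (Finset α)) := by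
  simp [properChains]

/-- The sum over all chains of nonempty proper subsets of `S` of the product of the weights. -/
noncomputable def chainSum [Fintype α] [CommSemiring R] (w : Finset α → R) (S : Finset α) : R :=
  ∑ C ∈ properChains S, ∏ E ∈ C, w E

theorem IsChain.sup_id_mem [DecidableEq α] {C : Finset (Finset α)}
    (hC : IsChain (· ⊆ ·) (↑C : Set (Finset α))) (hne : C.Nonempty) : C.sup id ∈ C := by
  obtain ⟨T, hT⟩ := C.exists_maximal hne
  have : C.sup id = T := by
    refine le_antisymm (Finset.sup_le fun E hE => ?_) (Finset.le_sup (f := id) hT.1)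
    rcases hC.total hE hT.1 with h | h
    · exact h
    · exact hT.2 hE h
  rw [this]
  exact hT.1

theorem chainSum_empty [Fintype α] [CommSemiring R] (w : Finset α → R) : chainSum w ∅ = 1 := by
  classical
  unfold chainSum
  rw [Finset.sum_eq_single ∅]
  · simp
  · intro C hC hne
    obtain ⟨E, hE⟩ := Finset.nonempty_iff_ne_empty.2 hne
    exact absurd (((mem_properChains.1 hC).1 E hE).2) (Finset.not_ssubset_empty E)
  · simp [mem_properChains]

/-- Sorting the chains by their largest member. -/
theorem chainSum_eq_sum_ssubsets [Fintype α] [DecidableEq α] [CommSemiring R]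
    (w : Finset α → R) (hw : w ∅ = 1) {S : Finset α} (hS : S.Nonempty) :
    chainSum w S = ∑ T ∈ S.ssubsets, w T * chainSum w T := by
  classical
  unfold chainSum
  have maps : ∀ C ∈ properChains S, C.sup id ∈ S.ssubsets := by
    intro C hC
    obtain ⟨h1, h2⟩ := mem_properChains.1 hC
    rw [Finset.mem_ssubsets]
    rcases C.eq_empty_or_nonempty with rfl | hne
    · simpa using hS.empty_ssubset
    · exact (h1 _ (h2.sup_id_mem hne)).2
  rw [← Finset.sum_fiberwise_of_maps_to maps]
  refine Finset.sum_congr rfl fun T hT => ?_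
  rw [Finset.mem_ssubsets] at hT
  rcases T.eq_empty_or_nonempty with rfl | hTne
  · rw [hw, one_mul]
    refine Finset.sum_congr ?_ fun _ _ => rfl
    ext C
    simp only [Finset.mem_filter, mem_properChains]
    constructor
    · rintro ⟨⟨h1, h2⟩, h3⟩
      refine ⟨fun E hE => ?_, h2⟩
      have hle : E ⊆ C.sup id := Finset.le_sup (f := id) hE
      rw [h3, Finset.subset_empty] at hle
      exact absurd hle (h1 E hE).1.ne_empty
    · rintro ⟨h1, h2⟩
      have hC : C = ∅ := Finset.eq_empty_of_forall_notMem fun E hE =>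
        Finset.not_ssubset_empty E (h1 E hE).2
      subst hC
      simp
  · rw [Finset.mul_sum]
    refine Finset.sum_bij' (fun C _ => C.erase T) (fun C _ => insert T C) ?_ ?_ ?_ ?_ ?_
    · intro C hC
      simp only [Finset.mem_filter, mem_properChains] at hC ⊢
      obtain ⟨⟨h1, h2⟩, h3⟩ := hC
      refine ⟨fun E hE => ?_, h2.mono (by simp)⟩
      rw [Finset.mem_erase] at hE
      refine ⟨(h1 E hE.2).1, Finset.ssubset_iff_subset_ne.2 ⟨?_, hE.1⟩⟩
      rw [← h3]
      exact Finset.le_sup (f := id) hE.2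
    · intro C hC
      simp only [Finset.mem_filter, mem_properChains] at hC ⊢
      obtain ⟨h1, h2⟩ := hC
      refine ⟨⟨fun E hE => ?_, ?_⟩, ?_⟩
      · rcases Finset.mem_insert.1 hE with rfl | hE
        · exact ⟨hTne, hT⟩
        · exact ⟨(h1 E hE).1, (h1 E hE).2.trans hT⟩
      · rw [Finset.coe_insert]
        exact h2.insert fun E hE _ => Or.inr (h1 E hE).2.subset
      · rw [Finset.sup_insert, id, sup_eq_left]
        exact Finset.sup_le fun E hE => (h1 E hE).2.subset
    · intro C hC
      simp only [Finset.mem_filter, mem_properChains] at hC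
      obtain ⟨⟨h1, h2⟩, h3⟩ := hC
      refine Finset.insert_erase ?_
      rw [← h3]
      refine h2.sup_id_mem (Finset.nonempty_iff_ne_empty.2 ?_)
      rintro rfl
      exact hTne.ne_empty (by simpa using h3.symm)
    · intro C hC
      exact Finset.erase_insert fun h => ((mem_properChains.1 hC).1 T h).2.ne rfl
    · intro C hC
      simp only [Finset.mem_filter, mem_properChains] at hC
      obtain ⟨⟨h1, h2⟩, h3⟩ := hC
      refine (Finset.mul_prod_erase C w ?_).symm
      rw [← h3]
      refine h2.sup_id_mem (Finset.nonempty_iff_ne_empty.2 ?_)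
      rintro rfl
      exact hTne.ne_empty (by simpa using h3.symm)

/-- The part of `chainSum w S` given by the chains whose largest member `T` is such that `a` is
the greatest element of `S ∖ T`. -/
noncomputable def chainSumWithLast [Fintype α] [LinearOrder α] [CommSemiring R]
    (w : Finset α → R) (S : Finset α) (a : α) : R :=
  ∑ T ∈ S.ssubsets with (S \ T).max = a, w T * chainSum w T

theorem Finset.max_sdiff_eq_coe_iff [LinearOrder α] {S T : Finset α} {a : α} :
    (S \ T).max = a ↔ (a ∈ S ∧ a ∉ T) ∧ ∀ x ∈ S, x ∉ T → x ≤ a := by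
  constructor
  · intro h
    exact ⟨Finset.mem_sdiff.1 (Finset.mem_of_max h), fun x hx hxT =>
      Finset.le_max_of_eq (Finset.mem_sdiff.2 ⟨hx, hxT⟩) h⟩
  · rintro ⟨ha, hmax⟩
    refine le_antisymm (Finset.max_le fun x hx => ?_) (Finset.le_max (Finset.mem_sdiff.2 ha))
    obtain ⟨hxS, hxT⟩ := Finset.mem_sdiff.1 hx
    exact WithBot.coe_le_coe.2 (hmax x hxS hxT)

/-- Sorting the proper subsets `T` of `S` by the greatest element of `S ∖ T`. -/
theorem Finset.sum_ssubsets_by_max_sdiff [LinearOrder α] [AddCommMonoid R] (f : Finset α → R)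
    (S : Finset α) :
    ∑ a ∈ S, ∑ T ∈ S.ssubsets with (S \ T).max = a, f T = ∑ T ∈ S.ssubsets, f T := by
  simp_rw [Finset.sum_filter]
  rw [Finset.sum_comm]
  refine Finset.sum_congr rfl fun T hT => ?_
  rw [Finset.mem_ssubsets] at hT
  obtain ⟨m, hm⟩ := Finset.max_of_nonempty (Finset.sdiff_nonempty.2 hT.2)
  simp_rw [hm, WithBot.coe_inj]
  rw [Finset.sum_ite_eq, if_pos (Finset.max_sdiff_eq_coe_iff.1 hm).1.1]

theorem sum_chainSumWithLast [Fintype α] [LinearOrder α] [CommSemiring R]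
    (w : Finset α → R) (hw : w ∅ = 1) {S : Finset α} (hS : S.Nonempty) :
    ∑ a ∈ S, chainSumWithLast w S a = chainSum w S := by
  rw [chainSum_eq_sum_ssubsets w hw hS]
  simp only [chainSumWithLast]
  exact Finset.sum_ssubsets_by_max_sdiff (fun T => w T * chainSum w T) S

/-- The recursion behind the lexicographic shelling of the Boolean lattice: prepending a last
step contributes `1 + w` at an ascent and `w` at a descent. -/
theorem chainSumWithLast_eq [Fintype α] [LinearOrder α] [CommSemiring R]
    (w : Finset α → R) (hw : w ∅ = 1) {S : Finset α} {a : α} (ha : a ∈ S)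
    (hS : (S.erase a).Nonempty) :
    chainSumWithLast w S a = ∑ b ∈ S.erase a,
      (if b < a then 1 + w (S.erase a) else w (S.erase a)) *
        chainSumWithLast w (S.erase a) b := by
  set S' := S.erase a with hS'
  have split : chainSumWithLast w S a = w S' * chainSum w S' +
      ∑ b ∈ S', if b < a then chainSumWithLast w S' b else 0 := by
    have hset : (S.ssubsets.filter fun T => (S \ T).max = a) =
        insert S' (S'.ssubsets.filter fun T => ∀ x ∈ S', x ∉ T → x < a) := by
      ext T
      simp only [Finset.mem_filter, Finset.mem_ssubsets, Finset.mem_insert,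
        Finset.max_sdiff_eq_coe_iff]
      constructor
      · rintro ⟨hT, ⟨-, haT⟩, hmax⟩
        rcases eq_or_ne T S' with h | h
        · exact Or.inl h
        · refine Or.inr ⟨Finset.ssubset_iff_subset_ne.2
            ⟨Finset.subset_erase.2 ⟨hT.subset, haT⟩, h⟩, fun x hx hxT => ?_⟩
          obtain ⟨hxa, hxS⟩ := Finset.mem_erase.1 hx
          exact lt_of_le_of_ne (hmax x hxS hxT) hxa
      · rintro (rfl | ⟨hT, hmax⟩)
        · refine ⟨Finset.erase_ssubset ha, ⟨ha, Finset.notMem_erase a S⟩, fun x hx hxT => ?_⟩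
          by_contra hlt
          exact hxT (Finset.mem_erase.2 ⟨fun h => hlt h.le, hx⟩)
        · refine ⟨hT.trans (Finset.erase_ssubset ha),
            ⟨ha, fun h => Finset.notMem_erase a S (hT.subset h)⟩, fun x hx hxT => ?_⟩
          rcases eq_or_ne x a with rfl | h
          · exact le_rfl
          · exact (hmax x (Finset.mem_erase.2 ⟨h, hx⟩) hxT).le
    rw [chainSumWithLast, hset, Finset.sum_insert (by simp)]
    congr 1
    rw [Finset.sum_filter, ← Finset.sum_ssubsets_by_max_sdiff]
    refine Finset.sum_congr rfl fun b hb => ?_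
    have hlast : ∀ T ∈ S'.ssubsets.filter fun T => (S' \ T).max = b,
        ((∀ x ∈ S', x ∉ T → x < a) ↔ b < a) := by
      intro T hT
      obtain ⟨⟨-, hbT⟩, hmax⟩ := Finset.max_sdiff_eq_coe_iff.1 (Finset.mem_filter.1 hT).2
      exact ⟨fun h => h b hb hbT, fun h x hx hxT => (hmax x hx hxT).trans_lt h⟩
    split_ifs with h
    · exact Finset.sum_congr rfl fun T hT => if_pos ((hlast T hT).2 h)
    · exact Finset.sum_eq_zero fun T hT => if_neg (mt (hlast T hT).1 h)
  rw [split, ← sum_chainSumWithLast w hw hS, Finset.mul_sum, ← Finset.sum_add_distrib]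
  refine Finset.sum_congr rfl fun b _ => ?_
  split_ifs
  · ring
  · ring

/-! ### Non-negative numerators over powers of `1 - X ^ L` -/

/-- `r` is of the form `N / (1 - X ^ L) ^ k` with `N` an integral polynomial with non-negative
coefficients. -/
def HasNonnegNumerator (L k : ℕ) (r : RatFunc ℚ) : Prop :=
  ∃ N : Polynomial ℤ, (∀ n, 0 ≤ N.coeff n) ∧
    r = algebraMap (Polynomial ℚ) (RatFunc ℚ) (N.map (Int.castRingHom ℚ)) /
      (1 - RatFunc.X ^ L) ^ k

namespace HasNonnegNumerator

variable {L k l : ℕ} {r r' : RatFunc ℚ}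

theorem zero : HasNonnegNumerator L k 0 := ⟨0, by simp, by simp⟩

theorem one : HasNonnegNumerator L 0 1 :=
  ⟨1, fun n => by rw [Polynomial.coeff_one]; split_ifs <;> simp, by simp⟩

theorem add (h : HasNonnegNumerator L k r) (h' : HasNonnegNumerator L k r') :
    HasNonnegNumerator L k (r + r') := by
  obtain ⟨N, hN, rfl⟩ := h
  obtain ⟨N', hN', rfl⟩ := h'
  refine ⟨N + N', fun n => ?_, ?_⟩
  · rw [Polynomial.coeff_add]
    exact add_nonneg (hN n) (hN' n)
  · rw [Polynomial.map_add, map_add, add_div]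

theorem mul (h : HasNonnegNumerator L k r) (h' : HasNonnegNumerator L l r') :
    HasNonnegNumerator L (k + l) (r * r') := by
  obtain ⟨N, hN, rfl⟩ := h
  obtain ⟨N', hN', rfl⟩ := h'
  refine ⟨N * N', fun n => ?_, ?_⟩
  · rw [Polynomial.coeff_mul]
    exact Finset.sum_nonneg fun p _ => mul_nonneg (hN p.1) (hN' p.2)
  · rw [Polynomial.map_mul, map_mul, pow_add, div_mul_div_comm]

theorem sum {ι : Type*} {s : Finset ι} {f : ι → RatFunc ℚ}
    (h : ∀ i ∈ s, HasNonnegNumerator L k (f i)) : HasNonnegNumerator L k (∑ i ∈ s, f i) :=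
  Finset.sum_induction f (HasNonnegNumerator L k) (fun _ _ => add) zero h

theorem X_pow (n : ℕ) : HasNonnegNumerator L 0 (RatFunc.X ^ n) :=
  ⟨Polynomial.X ^ n, fun m => by rw [Polynomial.coeff_X_pow]; split_ifs <;> simp, by simp⟩

end HasNonnegNumerator

theorem RatFunc.one_sub_X_pow_ne_zero {K : Type*} [Field K] {d : ℕ} (hd : d ≠ 0) :
    (1 - RatFunc.X ^ d : RatFunc K) ≠ 0 := by
  have h : (1 - Polynomial.X ^ d : Polynomial K) ≠ 0 := fun h => by
    simpa [Polynomial.coeff_X_pow, hd.symm] using congrArg (Polynomial.coeff · 0) h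
  simpa using RatFunc.algebraMap_ne_zero h

theorem HasNonnegNumerator.one_div_one_sub_X_pow {L d : ℕ} (hL : L ≠ 0) (hd : d ∣ L) :
    HasNonnegNumerator L 1 (1 / (1 - RatFunc.X ^ d)) := by
  obtain ⟨m, rfl⟩ := hd
  have hsum : HasNonnegNumerator (d * m) 0 (∑ i ∈ Finset.range m, (RatFunc.X ^ d) ^ i) :=
    HasNonnegNumerator.sum fun i _ => by
      rw [← pow_mul]
      exact HasNonnegNumerator.X_pow _
  obtain ⟨N, hN, h⟩ := hsum
  refine ⟨N, hN, ?_⟩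
  rw [pow_zero, div_one] at h
  have hd := RatFunc.one_sub_X_pow_ne_zero (K := ℚ) (left_ne_zero_of_mul hL)
  rw [← h, pow_one, div_eq_div_iff hd (RatFunc.one_sub_X_pow_ne_zero hL), one_mul, pow_mul]
  exact (geom_sum_mul_neg _ m).symm

theorem HasNonnegNumerator.chainSumWithLast [Fintype α] [LinearOrder α] {L : ℕ}
    {w : Finset α → RatFunc ℚ} (hw : w ∅ = 1) {U : Finset α}
    (hpos : ∀ T, T.Nonempty → T ⊂ U → HasNonnegNumerator L 1 (w T))
    (hpos' : ∀ T, T.Nonempty → T ⊂ U → HasNonnegNumerator L 1 (1 + w T)) (n : ℕ) :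
    ∀ S ⊆ U, S.card = n + 1 → ∀ a ∈ S, HasNonnegNumerator L n (chainSumWithLast w S a) := by
  induction n with
  | zero =>
    intro S _ hS a ha
    obtain ⟨b, rfl⟩ := Finset.card_eq_one.1 hS
    obtain rfl := Finset.mem_singleton.1 ha
    have : _root_.chainSumWithLast w {a} a = chainSum w {a} := by
      rw [← sum_chainSumWithLast w hw (Finset.singleton_nonempty a), Finset.sum_singleton]
    have hss : ({a} : Finset α).ssubsets = {∅} := by
      ext T
      simp [Finset.ssubset_singleton_iff]
    rw [this, chainSum_eq_sum_ssubsets w hw (Finset.singleton_nonempty a), hss,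
      Finset.sum_singleton, hw, chainSum_empty, one_mul]
    exact HasNonnegNumerator.one
  | succ n ih =>
    intro S hSU hS a ha
    have hcard : (S.erase a).card = n + 1 := by rw [Finset.card_erase_of_mem ha, hS]; rfl
    have hne : (S.erase a).Nonempty := Finset.card_pos.1 (by omega)
    have hlt : S.erase a ⊂ U := (Finset.erase_ssubset ha).trans_subset hSU
    rw [chainSumWithLast_eq w hw ha hne]
    refine HasNonnegNumerator.sum fun b hb => ?_
    rw [add_comm n 1]
    refine HasNonnegNumerator.mul ?_ (ih _ hlt.subset hcard b hb)
    split_ifs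
    · exact hpos' _ hne hlt
    · exact hpos _ hne hlt

/-- The weight of the empty set does not matter. -/
theorem chainSum_congr [Fintype α] [CommSemiring R] {w w' : Finset α → R} {S : Finset α}
    (h : ∀ T, T.Nonempty → T ⊂ S → w T = w' T) : chainSum w S = chainSum w' S := by
  classical
  refine Finset.sum_congr rfl fun C hC => Finset.prod_congr rfl fun T hT => ?_
  obtain ⟨hne, hlt⟩ := (mem_properChains.1 hC).1 T hT
  exact h T hne hlt

theorem HasNonnegNumerator.chainSum_univ [Fintype α] [Nonempty α] {L : ℕ} (hL : L ≠ 0)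
    {d : Finset α → ℕ} (hd : ∀ T, T.Nonempty → T ⊂ Finset.univ → d T ∣ L) :
    HasNonnegNumerator L (Fintype.card α - 1)
      (chainSum (fun T => RatFunc.X ^ d T / (1 - RatFunc.X ^ d T)) Finset.univ) := by
  classical
  let : LinearOrder α := LinearOrder.lift' (Fintype.equivFin α) (Fintype.equivFin α).injective
  let w : Finset α → RatFunc ℚ := fun T =>
    if T.Nonempty then RatFunc.X ^ d T / (1 - RatFunc.X ^ d T) else 1
  have hw : w ∅ = 1 := if_neg Finset.not_nonempty_empty
  have hpos : ∀ T, T.Nonempty → T ⊂ Finset.univ → HasNonnegNumerator L 1 (w T) := by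
    intro T hT hTu
    have h := (HasNonnegNumerator.X_pow (L := L) (d T)).mul
      (HasNonnegNumerator.one_div_one_sub_X_pow hL (hd T hT hTu))
    rw [zero_add, mul_one_div] at h
    simpa only [w, if_pos hT] using h
  have hpos' : ∀ T, T.Nonempty → T ⊂ Finset.univ → HasNonnegNumerator L 1 (1 + w T) := by
    intro T hT hTu
    have hne : (1 - RatFunc.X ^ d T : RatFunc ℚ) ≠ 0 :=
      RatFunc.one_sub_X_pow_ne_zero (ne_zero_of_dvd_ne_zero hL (hd T hT hTu))
    have h := HasNonnegNumerator.one_div_one_sub_X_pow hL (hd T hT hTu)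
    have heq : 1 + w T = 1 / (1 - RatFunc.X ^ d T) := by
      simp only [w, if_pos hT]
      rw [eq_div_iff hne, add_mul, div_mul_cancel₀ _ hne]
      ring
    rwa [heq]
  rw [chainSum_congr (w' := w) fun T hT _ => (if_pos hT).symm,
    ← sum_chainSumWithLast w hw Finset.univ_nonempty]
  refine HasNonnegNumerator.sum fun a ha => ?_
  refine HasNonnegNumerator.chainSumWithLast hw hpos hpos' _ _ subset_rfl ?_ a ha
  rw [Finset.card_univ, Nat.sub_add_cancel Fintype.card_pos]

end ChainSum

/-- Let `Q` be a 2-connected finite multigraph with at least one edge, so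
that `d_E := b(Q) − b(Q|_E) ≥ 1` for every proper nonempty subset `E ⊊ Q₁`.  Then the
rational function `H = hilbertChainSum Q ∈ ℚ(X)` can be written as
`N(X)/∏_{i=1}^{s}(1 − X^{e_i})` where `N ∈ ℤ[X]` has non-negative coefficients, `s ≥ 0`
and `e₁, …, e_s ≥ 1` are integers. -/
theorem hilbert_series_positivity (G : FinQuiver) (hE : Nonempty G.E)
    (h2 : G.TwoConnected) :
    (∀ E : Finset G.E, E.Nonempty → E ≠ Finset.univ → 1 ≤ dExp G E) ∧
    ∃ (N : Polynomial ℤ) (s : ℕ) (e : Fin s → ℕ),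
      (∀ n : ℕ, 0 ≤ N.coeff n) ∧ (∀ i : Fin s, 1 ≤ e i) ∧
      hilbertChainSum G
        = algebraMap (Polynomial ℚ) (RatFunc ℚ) (N.map (Int.castRingHom ℚ))
          / ∏ i : Fin s, (1 - RatFunc.X ^ (e i)) := by
  classical
  have hd : ∀ E : Finset G.E, E ≠ Finset.univ → 1 ≤ dExp G E := G.one_le_dExp h2
  refine ⟨fun E _ hE' => hd E hE', ?_⟩
  let L : ℕ := ∏ E ∈ Finset.univ.filter (· ≠ (Finset.univ : Finset G.E)), (dExp G E).toNat
  have hL : L ≠ 0 := Finset.prod_ne_zero_iff.2 fun E hE' => by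
    have := hd E (Finset.mem_filter.1 hE').2
    omega
  have hsum : hilbertChainSum G = chainSum (fun T => RatFunc.X ^ (dExp G T).toNat /
      (1 - RatFunc.X ^ (dExp G T).toNat)) Finset.univ := by
    unfold hilbertChainSum chainSum
    refine Finset.sum_congr ?_ fun C hC => Finset.prod_congr rfl fun T hT => ?_
    · ext C
      simp [mem_properChains, Finset.ssubset_univ_iff]
    · have h : ((dExp G T).toNat : ℤ) = dExp G T :=
        Int.toNat_of_nonneg (by
          have := hd T ((mem_properChains.1 hC).1 T hT).2.ne
          omega)
      simp only [← zpow_natCast, h]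
  obtain ⟨N, hN, h⟩ := HasNonnegNumerator.chainSum_univ hL
    (d := fun T : Finset G.E => (dExp G T).toNat) fun T _ hTu =>
      Finset.dvd_prod_of_mem (fun E => (dExp G E).toNat)
        (Finset.mem_filter.2 ⟨Finset.mem_univ T, hTu.ne⟩)
  refine ⟨N, Fintype.card G.E - 1, fun _ => L, hN, fun _ => Nat.one_le_iff_ne_zero.2 hL, ?_⟩
  rw [hsum, h, Finset.prod_const, Finset.card_univ, Fintype.card_fin]
end

section
/- Let Q be a finite quiver and α ≥ 1 an integer. There exists a polynomial P ∈ ℤ[X] with non-negative coefficients such that for every prime power q, A_{(Q,α),1̲}(q) = P(q). (Positivity of toric Kac polynomials of quivers with multiplicities.) -/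
namespace FinQuiver

variable (G : FinQuiver)

/-- Two vertices are joined by a path using only edges of `S`, in either direction. -/
def Joined (S : Set G.E) : G.V → G.V → Prop :=
  Relation.EqvGen fun i j => ∃ e ∈ S, G.s e = i ∧ G.t e = j

variable {G}

theorem joined_edge {S : Set G.E} {e : G.E} (he : e ∈ S) : G.Joined S (G.s e) (G.t e) :=
  .rel _ _ ⟨e, he, rfl, rfl⟩

/-- To be joined by `S` is the smallest equivalence relation containing the edges of `S`. -/
theorem Joined.lift {S : Set G.E} {r : G.V → G.V → Prop} (hr : Equivalence r)
    (h : ∀ e ∈ S, r (G.s e) (G.t e)) {i j : G.V} (hij : G.Joined S i j) : r i j := by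
  induction hij with
  | rel _ _ h' => obtain ⟨e, he, rfl, rfl⟩ := h'; exact h e he
  | refl => exact hr.refl _
  | symm _ _ _ ih => exact hr.symm ih
  | trans _ _ _ _ _ ih₁ ih₂ => exact hr.trans ih₁ ih₂

theorem Joined.of_edges {S S' : Set G.E} (h : ∀ e ∈ S, G.Joined S' (G.s e) (G.t e))
    {i j : G.V} (hij : G.Joined S i j) : G.Joined S' i j :=
  hij.lift (Relation.EqvGen.is_equivalence _) h

theorem Joined.mono {S S' : Set G.E} (h : ∀ e ∈ S, e ∈ S') {i j : G.V} (hij : G.Joined S i j) :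
    G.Joined S' i j :=
  hij.of_edges fun _ he => joined_edge (h _ he)

theorem restrictE_connected_iff (S : Set G.E) :
    (G.restrictE S).Connected ↔ Nonempty G.V ∧ ∀ i j, G.Joined S i j := by
  have key : ∀ i j : G.V, (G.restrictE S).adjGraph.Reachable i j ↔ G.Joined S i j := by
    intro i j
    constructor
    · refine fun h => ?_
      replace h := (SimpleGraph.reachable_iff_reflTransGen _ _).1 h
      induction h with
      | refl => exact .refl _
      | tail _ h ih =>
        refine ih.trans _ _ _ ?_
        obtain ⟨_, ⟨e, he, he'⟩ | ⟨e, he, he'⟩⟩ := (SimpleGraph.fromRel_adj _ _ _).1 h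
        · exact .rel _ _ ⟨e.1, e.2, he, he'⟩
        · exact .symm _ _ (.rel _ _ ⟨e.1, e.2, he, he'⟩)
    · refine Joined.lift (SimpleGraph.reachable_is_equivalence _) fun e he => ?_
      by_cases h : G.s e = G.t e
      · exact h ▸ SimpleGraph.Reachable.refl _
      · exact SimpleGraph.Adj.reachable
          ((SimpleGraph.fromRel_adj _ _ _).2 ⟨h, .inl ⟨⟨e, he⟩, rfl, rfl⟩⟩)
  unfold Connected
  rw [SimpleGraph.connected_iff, and_comm]
  exact and_congr Iff.rfl (forall₂_congr key)

/-- A system of equations `u (t b) = ε b * u (s b)` is solvable along any set of edges that can be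
ordered so that no edge joins two vertices already joined by the earlier edges. -/
theorem exists_gauge {M L : Type*} [CommGroup M] [LinearOrder L] {key : G.E → L}
    (hkey : Function.Injective key) (ε : G.E → M) (S : Finset G.E)
    (hS : ∀ b ∈ S, ¬ G.Joined {c | c ∈ S ∧ key c < key b} (G.s b) (G.t b)) :
    ∃ u : G.V → M, ∀ b ∈ S, u (G.t b) = ε b * u (G.s b) := by
  classical
  induction S using Finset.induction_on_max_value key with
  | empty => exact ⟨1, by simp⟩
  | insert b S hb hmax ih =>
    obtain ⟨u, hu⟩ := ih fun c hc h => hS c (Finset.mem_insert_of_mem hc)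
      (h.mono fun d hd => Set.mem_ofPred.2 ⟨Finset.mem_insert_of_mem hd.1, hd.2⟩)
    have hb' : ¬ G.Joined S (G.t b) (G.s b) := fun h =>
      hS b (Finset.mem_insert_self _ _) (Joined.mono (hij := h.symm _ _) fun c hc =>
        Set.mem_ofPred.2 ⟨Finset.mem_insert_of_mem hc,
          (hmax c hc).lt_of_ne fun h => hb (hkey h ▸ hc)⟩)
    refine ⟨fun i => if G.Joined S (G.t b) i then
      ε b * u (G.s b) * (u (G.t b))⁻¹ * u i else u i, fun c hc => ?_⟩
    rcases Finset.mem_insert.1 hc with rfl | hc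
    · have : G.Joined S (G.t c) (G.t c) := .refl _
      simp [hb', this]
    · have : G.Joined S (G.t b) (G.s c) ↔ G.Joined S (G.t b) (G.t c) :=
        ⟨fun h => h.trans _ _ _ (joined_edge hc),
          fun h => h.trans _ _ _ ((joined_edge hc).symm _ _)⟩
      simp only [this, hu c hc]
      split_ifs
      · exact mul_left_comm _ _ _
      · rfl

/-- The total order on the edges by weight, ties being broken by a fixed enumeration. -/
noncomputable def edgeKey {α : ℕ} (v : G.E → Fin (α + 1)) (a : G.E) : ℕ ×ₗ ℕ :=
  toLex ((v a : ℕ), (Fintype.equivFin G.E a : ℕ))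

/-- The edges of the minimal spanning forest of `G` for the weights `v`. -/
def minForest {α : ℕ} (v : G.E → Fin (α + 1)) : Set G.E :=
  {a | ¬ G.Joined {b | edgeKey v b < edgeKey v a} (G.s a) (G.t a)}

/-- The vertices of `a` are joined by edges of the minimal spanning forest that would precede `a`
if `a` had weight `n`. -/
def ForestJoined {α : ℕ} (v : G.E → Fin (α + 1)) (a : G.E) (n : ℕ) : Prop :=
  G.Joined {b | b ∈ minForest v ∧ edgeKey v b < toLex (n, (Fintype.equivFin G.E a : ℕ))}
    (G.s a) (G.t a)

section minForest

variable {α : ℕ} {v w : G.E → Fin (α + 1)}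

theorem edgeKey_injective (v : G.E → Fin (α + 1)) : Function.Injective (edgeKey v) := by
  intro a b h
  have := congrArg (fun x => (ofLex x).2) h
  exact (Fintype.equivFin G.E).injective (Fin.ext this)

theorem joined_minForest (v : G.E → Fin (α + 1)) (a : G.E) :
    G.Joined {b | b ∈ minForest v ∧ edgeKey v b ≤ edgeKey v a} (G.s a) (G.t a) := by
  induction h : edgeKey v a using WellFoundedLT.induction generalizing a with
  | ind k ih =>
    subst h
    by_cases ha : a ∈ minForest v
    · exact joined_edge (Set.mem_ofPred.2 ⟨ha, le_rfl⟩)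
    · refine Joined.of_edges (fun b hb => ?_) (not_not.1 ha)
      exact (ih _ hb b rfl).mono fun c hc => Set.mem_ofPred.2 ⟨hc.1, hc.2.trans (le_of_lt hb)⟩

theorem forestJoined_of_notMem {a : G.E} (ha : a ∉ minForest v) : ForestJoined v a (v a) :=
  Joined.of_edges (fun b hb => (joined_minForest v b).mono fun _ hc =>
    Set.mem_ofPred.2 ⟨hc.1, hc.2.trans_lt hb⟩) (not_not.1 ha)

theorem ForestJoined.mono {a : G.E} {m n : ℕ} (hmn : m ≤ n) (h : ForestJoined v a m) :
    ForestJoined v a n :=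
  Joined.mono (fun _ hb => Set.mem_ofPred.2
    ⟨hb.1, hb.2.trans_le (Prod.Lex.toLex_mono ⟨hmn, le_rfl⟩)⟩) h

/-- The weights with a given minimal spanning forest and given weights on it are those for which
every other edge comes after the path of the forest that joins its vertices. -/
theorem minForest_eq_iff (h : ∀ a ∈ minForest v, w a = v a) :
    minForest w = minForest v ↔ ∀ a ∉ minForest v, ForestJoined v a (w a) := by
  have hkey : ∀ a ∈ minForest v, edgeKey w a = edgeKey v a := fun a ha => by
    simp only [edgeKey, h a ha]
  constructor
  · intro hw a ha
    refine Joined.mono (fun b hb => ?_) (forestJoined_of_notMem (hw ▸ ha))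
    rw [Set.mem_ofPred_eq, hw] at hb
    exact ⟨hb.1, hkey b hb.1 ▸ hb.2⟩
  · intro hw
    ext a
    constructor
    · refine fun ha => by_contra fun ha' => ha (Joined.mono (hij := hw a ha') fun b hb => ?_)
      rw [Set.mem_ofPred_eq, hkey b hb.1]
      exact hb.2
    · intro ha ha'
      refine ha (Joined.of_edges (fun b hb => ?_) ha')
      rw [Set.mem_ofPred_eq, hkey a ha] at hb
      by_cases hbv : b ∈ minForest v
      · exact joined_edge (by rwa [hkey b hbv] at hb)
      · exact Joined.mono (hij := hw b hbv) fun c hc => lt_trans hc.2 hb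

theorem ne_last_of_mem_minForest (hv : ∀ i j, G.Joined {a | v a ≠ Fin.last α} i j)
    {a : G.E} (ha : a ∈ minForest v) : v a ≠ Fin.last α := by
  refine fun hva => ha ((hv _ _).mono fun b hb => ?_)
  refine Prod.Lex.toLex_lt_toLex.2 (.inl ?_)
  rw [hva]
  exact Fin.lt_last_iff_ne_last.2 hb

theorem joined_minForest_of_joined {S : Set G.E} {i j : G.V} (h : G.Joined S i j) :
    G.Joined (minForest v) i j :=
  h.of_edges fun a _ => (joined_minForest v a).mono fun _ hb => hb.1

open Classical in
/-- The minimal spanning forest together with the weights of its edges. -/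
noncomputable def forestType (v : G.E → Fin (α + 1)) (a : G.E) : Option (Fin (α + 1)) :=
  if a ∈ minForest v then some (v a) else none

theorem forestType_eq_iff :
    forestType w = forestType v ↔
      minForest w = minForest v ∧ ∀ a ∈ minForest v, w a = v a := by
  constructor
  · intro h
    have hmem : ∀ a, a ∈ minForest w ↔ a ∈ minForest v := fun a => by
      have := congrFun h a
      unfold forestType at this
      split_ifs at this <;> tauto
    refine ⟨Set.ext hmem, fun a ha => ?_⟩
    have := congrFun h a
    simpa [forestType, hmem, ha] using this
  · rintro ⟨h, h'⟩
    funext a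
    by_cases ha : a ∈ minForest v
    · simp [forestType, h, ha, h' a ha]
    · simp [forestType, h, ha]

end minForest

end FinQuiver

/-- The properties of the ring `𝔽_q[t]/(t^α)` on which the count of orbits depends. -/
structure IsTruncated (R : Type*) [CommRing R] (t : R) (α q : ℕ) : Prop where
  one_lt : 1 < q
  exists_eq_pow_mul_unit : ∀ x : R, ∃ m ≤ α, ∃ u : Rˣ, x = t ^ m * u
  pow_eq_zero : t ^ α = 0
  card_dvd : ∀ m ≤ α, Nat.card {y : R // t ^ m ∣ y} = q ^ (α - m)

open Classical in
/-- The largest `m ≤ α` such that `t ^ m` divides `x`. -/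
noncomputable def truncVal {R : Type*} [CommRing R] (t : R) (α : ℕ) (x : R) : Fin (α + 1) :=
  ⟨Nat.findGreatest (fun m => t ^ m ∣ x) α, Nat.lt_succ_of_le (Nat.findGreatest_le _)⟩

section truncVal

variable {R : Type*} [CommRing R] {t : R} {α q : ℕ}

theorem le_truncVal_iff {m : ℕ} (hm : m ≤ α) {x : R} :
    m ≤ (truncVal t α x : ℕ) ↔ t ^ m ∣ x := by
  classical
  constructor
  · intro h
    have : t ^ (truncVal t α x : ℕ) ∣ x :=
      Nat.findGreatest_spec (P := fun m => t ^ m ∣ x) (Nat.zero_le α) (by simp)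
    exact (pow_dvd_pow t h).trans this
  · exact fun h => Nat.le_findGreatest hm h

theorem truncVal_congr {x y : R} (h : ∀ m, t ^ m ∣ x ↔ t ^ m ∣ y) :
    truncVal t α x = truncVal t α y := by
  classical
  simp only [truncVal, h]

theorem truncVal_unit_mul_mul_unit (u w : Rˣ) (x : R) :
    truncVal t α (u * x * w) = truncVal t α x :=
  truncVal_congr fun m => by rw [Units.dvd_mul_right, Units.dvd_mul_left]

namespace IsTruncated

theorem finite (h : IsTruncated R t α q) : Finite R := by
  have hc := h.card_dvd 0 (Nat.zero_le _)
  have : Finite {y : R // t ^ 0 ∣ y} :=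
    Nat.finite_of_card_ne_zero (hc ▸ (pow_pos (zero_lt_one.trans h.one_lt) _).ne')
  exact Finite.of_injective (fun x : R => (⟨x, by simp⟩ : {y : R // t ^ 0 ∣ y}))
    fun x y hxy => congrArg Subtype.val hxy

theorem truncVal_pow (h : IsTruncated R t α q) {m : ℕ} (hm : m ≤ α) :
    (truncVal t α (t ^ m) : ℕ) = m := by
  refine le_antisymm (not_lt.1 fun hlt => ?_) ((le_truncVal_iff hm).2 dvd_rfl)
  have hm' : m + 1 ≤ α := hlt.trans_le (Nat.le_of_lt_succ (truncVal t α (t ^ m)).2)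
  have hdvd : t ^ (m + 1) ∣ t ^ m := (le_truncVal_iff hm').1 hlt
  have hiff : ∀ y, t ^ m ∣ y ↔ t ^ (m + 1) ∣ y :=
    fun y => ⟨hdvd.trans, (pow_dvd_pow t m.le_succ).trans⟩
  have hc := Nat.card_congr (Equiv.subtypeEquivRight hiff)
  rw [h.card_dvd m hm, h.card_dvd (m + 1) hm'] at hc
  have := Nat.pow_right_injective h.one_lt hc
  omega

theorem exists_eq_pow_truncVal_mul (h : IsTruncated R t α q) (x : R) :
    ∃ u : Rˣ, x = t ^ (truncVal t α x : ℕ) * u := by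
  obtain ⟨m, hm, u, rfl⟩ := h.exists_eq_pow_mul_unit x
  refine ⟨u, ?_⟩
  have := truncVal_unit_mul_mul_unit (t := t) (α := α) 1 u (t ^ m)
  rw [Units.val_one, one_mul] at this
  rw [this, h.truncVal_pow hm]

theorem truncVal_ne_last_iff (h : IsTruncated R t α q) {x : R} :
    truncVal t α x ≠ Fin.last α ↔ x ≠ 0 := by
  rw [not_iff_not, ← zero_dvd_iff, ← h.pow_eq_zero, ← le_truncVal_iff le_rfl, ← Fin.last_le_iff]
  rfl

end IsTruncated

end truncVal

namespace FinQuiver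

section orbits

variable {G : FinQuiver} {R : Type} [CommRing R] {t : R} {α q : ℕ}

theorem gaugeRel_equivalence : Equivalence (GaugeRel G R) where
  refl x := ⟨1, fun a => by simp⟩
  symm := by
    rintro x y ⟨u, hu⟩
    refine ⟨u⁻¹, fun a => ?_⟩
    simp [hu a, mul_assoc, mul_left_comm]
  trans := by
    rintro x y z ⟨u, hu⟩ ⟨w, hw⟩
    refine ⟨w * u, fun a => ?_⟩
    rw [hw a, hu a]
    simp only [Pi.mul_apply, Units.val_mul, mul_inv]
    ring

theorem truncVal_eq_of_gaugeRel {x y : G.E → R} (h : GaugeRel G R x y) :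
    (fun a => truncVal t α (y a)) = fun a => truncVal t α (x a) := by
  obtain ⟨u, hu⟩ := h
  funext a
  rw [hu a, truncVal_unit_mul_mul_unit]

/-- Representations of rank one with connected support. -/
abbrev ConnRep (G : FinQuiver) (R : Type) [CommRing R] : Type :=
  {x : G.E → R // (G.restrictE {a | x a ≠ 0}).Connected}

/-- The minimal spanning tree of an orbit for the valuations of its entries. -/
noncomputable def orbitType (G : FinQuiver) (t : R) (α : ℕ) :
    Quot (fun x y : ConnRep G R => GaugeRel G R x.1 y.1) → G.E → Option (Fin (α + 1)) :=
  Quot.lift (fun x => forestType fun a => truncVal t α (x.1 a))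
    fun _ _ h => congrArg forestType (truncVal_eq_of_gaugeRel h).symm

/-- The least weight an edge outside of the minimal spanning tree may have. -/
noncomputable def minWeight (v : G.E → Fin (α + 1)) (a : G.E) : ℕ :=
  sInf {n | ForestJoined v a n}

theorem minWeight_le_iff {v : G.E → Fin (α + 1)} {a : G.E} (ha : a ∉ minForest v) {n : ℕ} :
    minWeight v a ≤ n ↔ ForestJoined v a n :=
  ⟨fun h => ForestJoined.mono h
      (Nat.sInf_mem (s := {n | ForestJoined v a n}) ⟨_, forestJoined_of_notMem ha⟩),
    fun h => Nat.sInf_le h⟩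

theorem minWeight_le {v : G.E → Fin (α + 1)} {a : G.E} (ha : a ∉ minForest v) :
    minWeight v a ≤ α :=
  ((minWeight_le_iff ha).2 (forestJoined_of_notMem ha)).trans (Nat.le_of_lt_succ (v a).2)

open Classical in
/-- The entries allowed at the edge `a` for a representation in normal form. -/
def normalEntries (t : R) (v : G.E → Fin (α + 1)) (a : G.E) : Set R :=
  if a ∈ minForest v then {t ^ (v a : ℕ)} else {y | t ^ minWeight v a ∣ y}

open Classical in
/-- The exponent of `q` in the number of normal forms. -/
noncomputable def normalDim (v : G.E → Fin (α + 1)) : ℕ :=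
  ∑ a : G.E, if a ∈ minForest v then 0 else α - minWeight v a

theorem card_normalEntries (h : IsTruncated R t α q) (v : G.E → Fin (α + 1)) :
    Nat.card {y : G.E → R // ∀ a, y a ∈ normalEntries t v a} = q ^ normalDim v := by
  classical
  rw [Nat.card_congr Equiv.subtypePiEquivPi, Nat.card_pi, normalDim, ← Finset.prod_pow_eq_pow_sum]
  refine Finset.prod_congr rfl fun a _ => ?_
  unfold normalEntries
  split_ifs with ha
  · simp
  · exact h.card_dvd _ (minWeight_le ha)

theorem forall_mem_normalEntries_iff (h : IsTruncated R t α q) {v : G.E → Fin (α + 1)} {y : G.E → R} :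
    (∀ a, y a ∈ normalEntries t v a) ↔
      forestType (fun a => truncVal t α (y a)) = forestType v ∧
        ∀ a ∈ minForest v, y a = t ^ (v a : ℕ) := by
  have hentry : (∀ a, y a ∈ normalEntries t v a) ↔ (∀ a ∈ minForest v, y a = t ^ (v a : ℕ)) ∧
      ∀ a ∉ minForest v, ForestJoined v a (truncVal t α (y a)) := by
    rw [← forall_and]
    refine forall_congr' fun a => ?_
    by_cases ha : a ∈ minForest v
    · simp [normalEntries, ha]
    · simp [normalEntries, ha, ← minWeight_le_iff ha, le_truncVal_iff (minWeight_le ha)]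
  rw [hentry, and_comm (a := forestType _ = _)]
  refine and_congr_right fun hy => ?_
  have hv : ∀ a ∈ minForest v, truncVal t α (y a) = v a := fun a ha => by
    rw [hy a ha]
    exact Fin.ext (h.truncVal_pow (Nat.le_of_lt_succ (v a).2))
  rw [forestType_eq_iff, and_iff_left hv, minForest_eq_iff hv]

theorem connected_of_forestType_eq (h : IsTruncated R t α q) {v : G.E → Fin (α + 1)}
    [Nonempty G.V] (hv : ∀ i j, G.Joined {a | v a ≠ Fin.last α} i j) {y : G.E → R}
    (hy : forestType (fun a => truncVal t α (y a)) = forestType v) :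
    (G.restrictE {a | y a ≠ 0}).Connected := by
  rw [restrictE_connected_iff]
  refine ⟨inferInstance, fun i j => (joined_minForest_of_joined (v := v) (hv i j)).mono ?_⟩
  intro a ha
  refine h.truncVal_ne_last_iff.1 ?_
  rw [(forestType_eq_iff.1 hy).2 a ha]
  exact ne_last_of_mem_minForest hv ha

/-- Two normal forms in the same orbit coincide. -/
theorem eq_of_mem_normalEntries_of_gaugeRel {v : G.E → Fin (α + 1)}
    {x y : G.E → R} (hx : ∀ a, x a ∈ normalEntries t v a) (hy : ∀ a, y a ∈ normalEntries t v a)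
    (hxy : GaugeRel G R x y) : x = y := by
  obtain ⟨u, hu⟩ := hxy
  have htree : ∀ b ∈ minForest v, (u (G.s b) : R) * t ^ (v b : ℕ) = u (G.t b) * t ^ (v b : ℕ) := by
    intro b hb
    have hxb := hx b
    have hyb := hy b
    simp only [normalEntries, hb, if_true, Set.mem_singleton_iff] at hxb hyb
    have := hu b
    rw [hxb, hyb, Units.eq_mul_inv_iff_mul_eq] at this
    rw [← this, mul_comm]
  funext a
  by_cases ha : a ∈ minForest v
  · have hxa := hx a
    have hya := hy a
    simp only [normalEntries, ha, if_true, Set.mem_singleton_iff] at hxa hya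
    rw [hxa, hya]
  · have hxa := hx a
    simp only [normalEntries, ha, if_false, Set.mem_ofPred_eq] at hxa
    have hpath := (minWeight_le_iff ha).1 le_rfl
    have : (u (G.s a) : R) * t ^ minWeight v a = u (G.t a) * t ^ minWeight v a := by
      refine Joined.lift (r := fun i j => (u i : R) * t ^ minWeight v a = u j * t ^ minWeight v a)
        ⟨fun _ => rfl, Eq.symm, Eq.trans⟩ (fun b hb => ?_) hpath
      have hle : (v b : ℕ) ≤ minWeight v a := by
        rcases Prod.Lex.toLex_lt_toLex.1 hb.2 with h | h
        · exact h.le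
        · exact h.1.le
      obtain ⟨c, hc⟩ := pow_dvd_pow t hle
      rw [hc, ← mul_assoc, ← mul_assoc, htree b hb.1]
    obtain ⟨c, hc⟩ := hxa
    rw [hu a, Units.eq_mul_inv_iff_mul_eq, hc, mul_comm, ← mul_assoc, ← mul_assoc, this]

/-- Every orbit with the given minimal spanning tree contains a normal form. -/
theorem exists_gaugeRel_mem_normalEntries (h : IsTruncated R t α q) {v : G.E → Fin (α + 1)}
    {x : G.E → R} (hx : forestType (fun a => truncVal t α (x a)) = forestType v) :
    ∃ y, (∀ a, y a ∈ normalEntries t v a) ∧ GaugeRel G R y x := by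
  classical
  choose ε hε using fun a => h.exists_eq_pow_truncVal_mul (x a)
  obtain ⟨u, hu⟩ := exists_gauge (edgeKey_injective v) (fun b => (ε b)⁻¹)
    (Finset.univ.filter (· ∈ minForest v)) fun b hb hj =>
      (Finset.mem_filter.1 hb).2 (hj.mono fun c hc => hc.2)
  have hrel : GaugeRel G R x fun a => u (G.t a) * x a * ((u (G.s a))⁻¹ : Rˣ) := ⟨u, fun _ => rfl⟩
  refine ⟨_, (forall_mem_normalEntries_iff h).2 ⟨?_, fun a ha => ?_⟩,
    gaugeRel_equivalence.symm hrel⟩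
  · rw [truncVal_eq_of_gaugeRel hrel, hx]
  · have hua := hu a (by simpa using ha)
    have hva := (forestType_eq_iff.1 hx).2 a ha
    rw [hua, Units.mul_inv_eq_iff_eq_mul, hε a, hva]
    have : ((ε a)⁻¹ : Rˣ) * (ε a : R) = 1 := Units.inv_mul _
    push_cast
    linear_combination (u (G.s a) : R) * t ^ (v a : ℕ) * this

theorem card_orbitType_eq (h : IsTruncated R t α q) {v : G.E → Fin (α + 1)}
    [Nonempty G.V] (hv : ∀ i j, G.Joined {a | v a ≠ Fin.last α} i j) :
    Nat.card {o // orbitType (R := R) G t α o = forestType v} = q ^ normalDim v := by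
  rw [← card_normalEntries h v]
  symm
  let toOrbit : {y : G.E → R // ∀ a, y a ∈ normalEntries t v a} →
      {o // orbitType (R := R) G t α o = forestType v} := fun y =>
    have hy := ((forall_mem_normalEntries_iff h).1 y.2).1
    ⟨Quot.mk _ ⟨y.1, connected_of_forestType_eq h hv hy⟩, hy⟩
  refine Nat.card_congr (Equiv.ofBijective toOrbit ⟨fun x y hxy => ?_, ?_⟩)
  · have hrel := (Equivalence.eqvGen_iff (gaugeRel_equivalence.comap Subtype.val)).1
      (Quot.eqvGen_exact (congrArg Subtype.val hxy))
    exact Subtype.ext (eq_of_mem_normalEntries_of_gaugeRel x.2 y.2 hrel)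
  · rintro ⟨⟨x⟩, hx⟩
    obtain ⟨y, hy, hyx⟩ := exists_gaugeRel_mem_normalEntries h (x := x.1) hx
    exact ⟨⟨y, hy⟩, Subtype.ext (Quot.sound hyx)⟩

open Classical in
/-- The polynomial counting the orbits with a given weighted minimal spanning tree. -/
noncomputable def typePolynomial (τ : G.E → Option (Fin (α + 1))) : Polynomial ℤ :=
  if h : Nonempty G.V ∧ ∃ v, (∀ i j, G.Joined {a | v a ≠ Fin.last α} i j) ∧ forestType v = τ then
    Polynomial.X ^ normalDim h.2.choose
  else 0

theorem typePolynomial_coeff_nonneg (τ : G.E → Option (Fin (α + 1))) (n : ℕ) :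
    0 ≤ (typePolynomial τ).coeff n := by
  unfold typePolynomial
  split_ifs
  · rw [Polynomial.coeff_X_pow]
    split_ifs <;> simp
  · simp

theorem card_orbitType (h : IsTruncated R t α q) (τ : G.E → Option (Fin (α + 1))) :
    (Nat.card {o // orbitType (R := R) G t α o = τ} : ℤ) = (typePolynomial τ).eval (q : ℤ) := by
  unfold typePolynomial
  split_ifs with hτ
  · obtain ⟨hv, hvτ⟩ := hτ.2.choose_spec
    have := hτ.1
    have hc := card_orbitType_eq h hv
    rw [hvτ] at hc
    rw [hc]
    simp
  · have : IsEmpty {o // orbitType (R := R) G t α o = τ} := by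
      refine ⟨?_⟩
      rintro ⟨⟨x⟩, hx⟩
      obtain ⟨hne, hj⟩ := (restrictE_connected_iff _).1 x.2
      refine hτ ⟨hne, fun a => truncVal t α (x.1 a), fun i j => ?_, hx⟩
      exact (hj i j).mono fun a ha => h.truncVal_ne_last_iff.2 ha
    simp

open Classical in
/-- The polynomial counting all orbits with connected support. -/
noncomputable def kacPolynomial (G : FinQuiver) (α : ℕ) : Polynomial ℤ :=
  ∑ τ : G.E → Option (Fin (α + 1)), typePolynomial τ

theorem kacPolynomial_coeff_nonneg (n : ℕ) : 0 ≤ (kacPolynomial G α).coeff n := by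
  rw [kacPolynomial, Polynomial.finsetSum_coeff]
  exact Finset.sum_nonneg fun τ _ => typePolynomial_coeff_nonneg τ n

theorem kacCount_eq (h : IsTruncated R t α q) :
    (KacCount G R : ℤ) = (kacPolynomial G α).eval (q : ℤ) := by
  classical
  have := h.finite
  rw [kacPolynomial, Polynomial.eval_finsetSum]
  simp_rw [← card_orbitType (G := G) h]
  rw [← Nat.cast_sum, ← Nat.card_sigma]
  exact congrArg _ (Nat.card_congr (Equiv.sigmaFiberEquiv (orbitType (R := R) G t α)).symm)

end orbits

end FinQuiver

section TruncRing

open Polynomial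

variable (F : Type) [Field F] (α : ℕ)

theorem tvar_pow_eq_zero : tvar F α ^ α = 0 := by
  rw [tvar, ← map_pow, Ideal.Quotient.eq_zero_iff_mem]
  exact Ideal.mem_span_singleton_self _

theorem exists_eq_tvar_pow_mul_unit (x : TruncRing F α) :
    ∃ m ≤ α, ∃ u : (TruncRing F α)ˣ, x = tvar F α ^ m * u := by
  obtain ⟨p, rfl⟩ := Ideal.Quotient.mk_surjective x
  by_cases hp : (X : F[X]) ^ α ∣ p
  · refine ⟨α, le_rfl, 1, ?_⟩
    rw [tvar_pow_eq_zero, zero_mul, Ideal.Quotient.eq_zero_iff_mem]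
    exact Ideal.mem_span_singleton.2 hp
  · have hp0 : p ≠ 0 := by rintro rfl; simp at hp
    obtain ⟨r, hr, hXr⟩ := p.exists_eq_pow_rootMultiplicity_mul_and_not_dvd hp0 0
    rw [map_zero, sub_zero] at hr hXr
    obtain ⟨a, b, hab⟩ : IsCoprime r (X ^ α) :=
      (((irreducible_X (R := F)).coprime_iff_not_dvd.2 hXr).symm).pow_right
    have hunit : IsUnit (Ideal.Quotient.mk (Ideal.span {(X : F[X]) ^ α}) r) := by
      refine IsUnit.of_mul_eq_one (Ideal.Quotient.mk _ a) ?_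
      rw [← map_mul, ← map_one (Ideal.Quotient.mk _), Ideal.Quotient.eq, Ideal.mem_span_singleton]
      exact ⟨-b, by linear_combination hab⟩
    refine ⟨p.rootMultiplicity 0, not_lt.1 fun hlt => hp ?_, hunit.unit, ?_⟩
    · rw [hr]
      exact (pow_dvd_pow X hlt.le).mul_right r
    · rw [IsUnit.unit_spec, tvar, ← map_pow, ← map_mul, ← hr]

theorem card_tvar_pow_dvd [Fintype F] {m : ℕ} (hm : m ≤ α) :
    Nat.card {y : TruncRing F α // tvar F α ^ m ∣ y} = Fintype.card F ^ (α - m) := by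
  let f : degreeLT F (α - m) → {y : TruncRing F α // tvar F α ^ m ∣ y} := fun p =>
    ⟨tvar F α ^ m * Ideal.Quotient.mk _ p.1, dvd_mul_right _ _⟩
  have hmk (p r : F[X]) : tvar F α ^ m * Ideal.Quotient.mk _ p =
      tvar F α ^ m * Ideal.Quotient.mk _ r ↔ X ^ (α - m) ∣ p - r := by
    rw [tvar, ← map_pow, ← map_mul, ← map_mul, Ideal.Quotient.eq, Ideal.mem_span_singleton,
      ← mul_sub]
    conv_lhs => rw [← Nat.add_sub_of_le hm, pow_add]
    exact mul_dvd_mul_iff_left (pow_ne_zero _ X_ne_zero)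
  have hf : Function.Bijective f := by
    constructor
    · intro p r hpr
      have hdvd := (hmk _ _).1 (congrArg Subtype.val hpr)
      have hdeg := mem_degreeLT.1 (p - r).2
      refine sub_eq_zero.1 (Subtype.ext (eq_zero_of_dvd_of_degree_lt hdvd ?_))
      rw [degree_X_pow]
      exact hdeg
    · rintro ⟨y, z, rfl⟩
      obtain ⟨p, rfl⟩ := Ideal.Quotient.mk_surjective z
      have hmonic : (X ^ (α - m) : F[X]).Monic := monic_X_pow _
      refine ⟨⟨p %ₘ X ^ (α - m), mem_degreeLT.2 ?_⟩, Subtype.ext ((hmk _ _).2 ?_)⟩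
      · simpa using degree_modByMonic_lt p hmonic
      · refine ⟨-(p /ₘ X ^ (α - m)), ?_⟩
        linear_combination modByMonic_add_div p (X ^ (α - m))
  rw [← Nat.card_congr (Equiv.ofBijective f hf), Nat.card_congr (degreeLTEquiv F (α - m)).toEquiv]
  simp

theorem isTruncated_truncRing [Fintype F] :
    IsTruncated (TruncRing F α) (tvar F α) α (Fintype.card F) where
  one_lt := Fintype.one_lt_card
  exists_eq_pow_mul_unit := exists_eq_tvar_pow_mul_unit F α
  pow_eq_zero := tvar_pow_eq_zero F α
  card_dvd _ := card_tvar_pow_dvd F α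

end TruncRing

/-- positivity of toric Kac polynomials of quivers with multiplicities.
Let `Q` be a finite quiver and `α ≥ 1` an integer.  There exists a polynomial
`P ∈ ℤ[X]` with non-negative coefficients such that for every prime power `q`
(i.e. every finite field `F` of cardinality `q`, with `R = 𝔽_q[t]/(t^α)`),
`A_{(Q,α),1̲}(q) = P(q)`. -/
theorem toric_kac_polynomial_positivity (G : FinQuiver) (α : ℕ) (hα : 1 ≤ α) :
    ∃ P : Polynomial ℤ, (∀ n : ℕ, 0 ≤ P.coeff n) ∧
      ∀ (F : Type) [Field F] [Fintype F],
        (KacCount G (TruncRing F α) : ℤ) = P.eval (Fintype.card F : ℤ) := by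
  exact ⟨FinQuiver.kacPolynomial G α, FinQuiver.kacPolynomial_coeff_nonneg, fun F _ _ =>
    FinQuiver.kacCount_eq (isTruncated_truncRing F α)⟩
end
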